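/- arXiv:math/0103044 — 6 statements merged into one kernel-verified Lean document; each statement's English description precedes it below -/
import Mathlib

section
/- Let (S,T) be modular data on Φ. Then for every ring automorphism τ of ℂ there exist a permutation g of Φ and a function ε : Φ → {1,-1} such that τ(S_{ab}) = ε(a) · S_{ga,b} = ε(b) · S_{a,gb} for all a, b ∈ Φ. Moreover all entries of S are cyclotomic numbers: there exists n ≥ 1 such that S_{ab} ∈ ℚ(e^{2πi/n}) for all a, b ∈ Φ. -/
open scoped BigOperators
open Complex

/-- Modular data on a finite set `Φ` with distinguished element `zero`: a unitary symmetric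
matrix `S`, a diagonal matrix `T` of finite order, with the `zero`-row of `S` real and
strictly positive, `S² = (ST)³`, and nonnegative-integer fusion coefficients `N a b c` given
by Verlinde's formula. -/
structure ModularData (Φ : Type) [Fintype Φ] [DecidableEq Φ] where
  zero : Φ
  S : Matrix Φ Φ ℂ
  T : Matrix Φ Φ ℂ
  N : Φ → Φ → Φ → ℕ
  S_unitary : S * S.conjTranspose = 1
  S_symm : ∀ a b, S a b = S b a
  T_diag : ∀ a b, a ≠ b → T a b = 0
  T_order : ∃ m : ℕ, 0 < m ∧ T ^ m = 1
  S_zero_pos : ∀ a, (S zero a).im = 0 ∧ 0 < (S zero a).re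
  modular_rel : S ^ 2 = (S * T) ^ 3
  verlinde : ∀ a b c,
    (N a b c : ℂ) = ∑ d, S a d * S b d * (starRingEnd ℂ) (S c d) / S zero d

namespace ModularData
variable {Φ : Type} [Fintype Φ] [DecidableEq Φ] (M : ModularData Φ)

lemma row_orth (a b : Φ) : ∑ d, M.S a d * (starRingEnd ℂ) (M.S b d) = if a = b then 1 else 0 := by
  have := congrFun (congrFun M.S_unitary a) b
  simpa [Matrix.mul_apply, Matrix.one_apply] using this

lemma col_orth (d e : Φ) : ∑ a, (starRingEnd ℂ) (M.S a d) * M.S a e = if d = e then 1 else 0 := by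
  have h : M.S.conjTranspose * M.S = 1 := mul_eq_one_comm.mp M.S_unitary
  have := congrFun (congrFun h d) e
  simpa [Matrix.mul_apply, Matrix.one_apply] using this

lemma S0_ne (d : Φ) : M.S M.zero d ≠ 0 := by
  intro h
  have := (M.S_zero_pos d).2
  rw [h] at this
  simp at this

lemma S0_conj (d : Φ) : (starRingEnd ℂ) (M.S M.zero d) = M.S M.zero d :=
  Complex.conj_eq_iff_im.mpr (M.S_zero_pos d).1

/-- The Verlinde formula in the form the columns of `S` are characters. -/
lemma fusion_char (a b e : Φ) :
    ∑ c, (M.N a b c : ℂ) * M.S c e = M.S a e * M.S b e / M.S M.zero e := by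
  simp_rw [M.verlinde, Finset.sum_mul]
  rw [Finset.sum_comm]
  have : ∀ d, ∑ c, M.S a d * M.S b d * (starRingEnd ℂ) (M.S c d) / M.S M.zero d * M.S c e
      = M.S a d * M.S b d / M.S M.zero d * (if d = e then 1 else 0) := by
    intro d
    rw [← M.col_orth d e, Finset.mul_sum]
    refine Finset.sum_congr rfl fun c _ => ?_
    ring
  simp_rw [this]
  simp

/-- Every character of the fusion algebra comes from a column of `S`. -/
lemma char_classify (χ : Φ → ℂ) (h0 : χ M.zero = 1)
    (h : ∀ a b, χ a * χ b = ∑ c, (M.N a b c : ℂ) * χ c) :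
    ∃ d, ∀ a, χ a = M.S a d / M.S M.zero d := by
  let v : Φ → ℂ := fun d => ∑ c, (starRingEnd ℂ) (M.S c d) * χ c
  have hv : ∀ b, χ b = ∑ d, M.S b d * v d := by
    intro b
    simp only [v, Finset.mul_sum]
    rw [Finset.sum_comm]
    have : ∀ c, ∑ d, M.S b d * ((starRingEnd ℂ) (M.S c d) * χ c)
        = (if b = c then 1 else 0) * χ c := by
      intro c
      rw [← M.row_orth b c, Finset.sum_mul]
      refine Finset.sum_congr rfl fun d _ => ?_
      ring
    simp_rw [this]
    simp
  have hex : ∃ d, v d ≠ 0 := by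
    by_contra hcon
    push Not at hcon
    have := hv M.zero
    simp [hcon, h0] at this
  obtain ⟨d, hd⟩ := hex
  refine ⟨d, fun a => ?_⟩
  have h1 : ∀ b, χ a * χ b = ∑ e, M.S b e * (M.S a e / M.S M.zero e * v e) := by
    intro b
    rw [h]
    simp_rw [M.verlinde, Finset.sum_mul]
    rw [Finset.sum_comm]
    refine Finset.sum_congr rfl fun e _ => ?_
    simp only [v, Finset.mul_sum]
    refine Finset.sum_congr rfl fun c _ => ?_
    ring
  have h2 : ∑ b, (starRingEnd ℂ) (M.S b d) * (χ a * χ b) = M.S a d / M.S M.zero d * v d := by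
    simp_rw [h1, Finset.mul_sum]
    rw [Finset.sum_comm]
    have : ∀ e, ∑ b, (starRingEnd ℂ) (M.S b d) * (M.S b e * (M.S a e / M.S M.zero e * v e))
        = (if d = e then 1 else 0) * (M.S a e / M.S M.zero e * v e) := by
      intro e
      rw [← M.col_orth d e, Finset.sum_mul]
      refine Finset.sum_congr rfl fun b _ => ?_
      ring
    simp_rw [this]
    simp
  have h3 : ∑ b, (starRingEnd ℂ) (M.S b d) * (χ a * χ b) = χ a * v d := by
    simp only [v, Finset.mul_sum]
    refine Finset.sum_congr rfl fun c _ => ?_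
    ring
  exact mul_right_cancel₀ hd (h3.symm.trans h2)

lemma col_inj (d e : Φ) (k : ℂ) (h : ∀ a, M.S a d = k * M.S a e) : d = e := by
  by_contra hne
  have h1 := M.col_orth e d
  rw [if_neg (Ne.symm hne)] at h1
  have h2 := M.col_orth e e
  simp only [if_true] at h2
  have h3 : ∑ a, (starRingEnd ℂ) (M.S a e) * M.S a d = k := by
    have h4 : ∑ a, (starRingEnd ℂ) (M.S a e) * M.S a d
        = k * ∑ a, (starRingEnd ℂ) (M.S a e) * M.S a e := by
      rw [Finset.mul_sum]
      refine Finset.sum_congr rfl fun b _ => ?_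
      rw [h]
      ring
    rw [h4, h2, mul_one]
  have hk : k = 0 := h3.symm.trans h1
  exact M.S0_ne d (by rw [h, hk, zero_mul])

section core
variable {F : Type} [Field F] (i τ : F →+* ℂ) (s : Φ → Φ → F)

lemma core_perm (hs : ∀ a b, i (s a b) = M.S a b) :
    ∃ (g : Equiv.Perm Φ) (ρ : Φ → ℂ), ∀ a b, τ (s a b) = ρ b * M.S a (g b) := by
  have hs0 : ∀ d, s M.zero d ≠ 0 := by
    intro d h
    apply M.S0_ne d
    rw [← hs, h, map_zero]
  have hchar : ∀ d, ∃ e, ∀ a, τ (s a d / s M.zero d) = M.S a e / M.S M.zero e := by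
    intro d
    apply M.char_classify (fun a => τ (s a d / s M.zero d))
    · simp [div_self (hs0 d)]
    · intro a b
      have : s a d / s M.zero d * (s b d / s M.zero d)
          = ∑ c, (M.N a b c : F) * (s c d / s M.zero d) := by
        apply i.injective
        simp only [map_mul, map_div₀, map_sum, map_natCast, hs]
        have := M.fusion_char a b d
        have h0 := M.S0_ne d
        simp_rw [← mul_div_assoc]
        rw [← Finset.sum_div, this]
        ring
      rw [← map_mul, this]
      simp
  choose g hg using hchar
  have hinj : Function.Injective g := by
    intro d e hde
    have h1 : ∀ a, s a d / s M.zero d = s a e / s M.zero e := by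
      intro a
      apply τ.injective
      rw [hg, hg, hde]
    apply M.col_inj d e (M.S M.zero d / M.S M.zero e)
    intro a
    have := congrArg i (h1 a)
    simp only [map_div₀, hs] at this
    have h0 := M.S0_ne d
    have h0' := M.S0_ne e
    field_simp at this ⊢
    linear_combination this
  refine ⟨Equiv.ofBijective g (Finite.injective_iff_bijective.mp hinj),
    fun d => τ (s M.zero d) / M.S M.zero (g d), fun a b => ?_⟩
  have := hg b a
  have h0 := M.S0_ne (g b)
  have h1 : τ (s M.zero b) ≠ 0 := by simpa using hs0 b
  rw [map_div₀] at this
  simp only [Equiv.ofBijective_apply]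
  field_simp at this ⊢
  linear_combination this

lemma conj_perm : ∃ cc : Equiv.Perm Φ, ∀ a b, (starRingEnd ℂ) (M.S a b) = M.S a (cc b) := by
  obtain ⟨g, ρ, h⟩ := M.core_perm (RingHom.id ℂ) (starRingEnd ℂ) M.S (fun _ _ => rfl)
  refine ⟨g, fun a b => ?_⟩
  have h0 := h M.zero b
  rw [M.S0_conj] at h0
  have hρ : ρ b = (((M.S M.zero b).re / (M.S M.zero (g b)).re : ℝ) : ℂ) := by
    have e1 : M.S M.zero b = ((M.S M.zero b).re : ℂ) :=
      (Complex.conj_eq_iff_re.mp (M.S0_conj b)).symm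
    have e2 : M.S M.zero (g b) = ((M.S M.zero (g b)).re : ℂ) :=
      (Complex.conj_eq_iff_re.mp (M.S0_conj (g b))).symm
    have e3 := M.S0_ne (g b)
    push_cast
    rw [← e1, ← e2, h0]
    field_simp
  have hpos : 0 < (M.S M.zero b).re / (M.S M.zero (g b)).re :=
    div_pos (M.S_zero_pos b).2 (M.S_zero_pos (g b)).2
  have hn : ρ b * (starRingEnd ℂ) (ρ b) = 1 := by
    have h1 := M.col_orth b b
    have h2 := M.col_orth (g b) (g b)
    simp only [if_true] at h1 h2
    rw [← h1, ← mul_one (ρ b * _), ← h2, Finset.mul_sum]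
    refine Finset.sum_congr rfl fun a _ => ?_
    have h3 : M.S a b = (starRingEnd ℂ) (ρ b) * (starRingEnd ℂ) (M.S a (g b)) := by
      rw [← map_mul, ← h, Complex.conj_conj]
    have h4 := h a b
    rw [h4, h3]
    ring
  have : ρ b = 1 := by
    rw [hρ] at hn ⊢
    rw [Complex.conj_ofReal] at hn
    norm_cast at hn ⊢
    nlinarith
  rw [h, this, one_mul]

lemma core_galois (hs : ∀ a b, i (s a b) = M.S a b) :
    ∃ (g : Equiv.Perm Φ) (ε : Φ → ℂ), (∀ a, ε a = 1 ∨ ε a = -1) ∧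
    (∀ a b, τ (s a b) = ε a * M.S (g a) b ∧ τ (s a b) = ε b * M.S a (g b)) := by
  obtain ⟨g, ρ, h⟩ := M.core_perm i τ s hs
  obtain ⟨cc, hcc⟩ := M.conj_perm
  have hsym : ∀ a b, s a b = s b a := fun a b => i.injective (by rw [hs, hs, M.S_symm])
  have hcc' : ∀ a b, (starRingEnd ℂ) (M.S a b) = M.S (cc a) b := by
    intro a b
    rw [M.S_symm, hcc, M.S_symm]
  have hone : ∀ d, ∑ a, s (cc a) d * s a d = 1 := by
    intro d
    apply i.injective
    have := M.col_orth d d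
    simp only [if_true, hcc'] at this
    simpa [hs] using this
  have hsq : ∀ d, ρ d * ρ d = 1 := by
    intro d
    have h1 := congrArg τ (hone d)
    have h2 := M.col_orth (g d) (g d)
    simp only [if_true, hcc'] at h2
    simp only [map_sum, map_mul, map_one, h] at h1
    rw [← h1, ← mul_one (ρ d * _), ← h2, Finset.mul_sum]
    refine Finset.sum_congr rfl fun a _ => ?_
    ring
  refine ⟨g, ρ, fun a => mul_self_eq_one_iff.mp (hsq a), fun a b => ⟨?_, h a b⟩⟩
  rw [hsym, h, M.S_symm]
end core
end ModularData
namespace ModularData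
variable {Φ : Type} [Fintype Φ] [DecidableEq Φ] (M : ModularData Φ)

lemma lambda_integral (a d : Φ) : IsIntegral ℤ (M.S a d / M.S M.zero d) := by
  apply isIntegral_of_smul_mem_submodule
    (N := Submodule.span ℤ (Set.range fun b => M.S b d / M.S M.zero d))
  · intro h
    have h1 : (1 : ℂ) ∈ Submodule.span ℤ (Set.range fun b => M.S b d / M.S M.zero d) :=
      Submodule.subset_span ⟨M.zero, div_self (M.S0_ne d)⟩
    rw [h] at h1
    simp at h1
  · exact Submodule.fg_span (Set.finite_range _)
  · intro n hn
    induction hn using Submodule.span_induction with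
    | mem x hx =>
      obtain ⟨b, rfl⟩ := hx
      have h1 : (M.S a d / M.S M.zero d) • (M.S b d / M.S M.zero d)
          = ∑ c, (M.N a b c : ℤ) • (M.S c d / M.S M.zero d) := by
        have := M.fusion_char a b d
        simp only [smul_eq_mul, zsmul_eq_mul, Int.cast_natCast]
        simp_rw [← mul_div_assoc]
        rw [← Finset.sum_div, this]
        ring
      simp only
      rw [h1]
      exact Submodule.sum_mem _ fun c _ => Submodule.smul_mem _ _ (Submodule.subset_span ⟨c, rfl⟩)
    | zero => simp
    | add x y _ _ hx hy => rw [smul_add]; exact Submodule.add_mem _ hx hy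
    | smul k x _ hx => rw [smul_comm]; exact Submodule.smul_mem _ _ hx

lemma S_algebraic (a d : Φ) : IsAlgebraic ℚ (M.S a d) := by
  have hl : ∀ a, IsAlgebraic ℚ (M.S a d / M.S M.zero d) := fun a =>
    (M.lambda_integral a d).tower_top.isAlgebraic
  obtain ⟨cc, hcc⟩ := M.conj_perm
  have h1 : ((M.S M.zero d) ^ 2)⁻¹
      = ∑ a, M.S (cc a) d / M.S M.zero d * (M.S a d / M.S M.zero d) := by
    have := M.col_orth d d
    have h0 := M.S0_ne d
    simp only [if_true] at this
    have e : ∀ a, (starRingEnd ℂ) (M.S a d) = M.S (cc a) d := fun a => by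
      rw [M.S_symm, hcc, M.S_symm]
    simp only [e] at this
    rw [← one_div, ← this, Finset.sum_div]
    refine Finset.sum_congr rfl fun b _ => ?_
    field_simp
  have h2 : IsAlgebraic ℚ (((M.S M.zero d) ^ 2)⁻¹) := by
    rw [h1]
    have : ∑ a, M.S (cc a) d / M.S M.zero d * (M.S a d / M.S M.zero d) ∈ algebraicClosure ℚ ℂ :=
      sum_mem fun a _ => mul_mem (mem_algebraicClosure_iff.mpr (hl _))
        (mem_algebraicClosure_iff.mpr (hl _))
    exact mem_algebraicClosure_iff.mp this
  have h3 : IsAlgebraic ℚ (M.S M.zero d) := by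
    rw [IsAlgebraic.inv_iff] at h2
    exact h2.of_pow (by norm_num)
  have := (hl a).mul h3
  rwa [div_mul_cancel₀ _ (M.S0_ne d)] at this

lemma T_pow : ∃ m : ℕ, 0 < m ∧ ∀ a, (M.T a a) ^ m = 1 := by
  obtain ⟨m, hm, h⟩ := M.T_order
  refine ⟨m, hm, fun a => ?_⟩
  have hT : M.T = Matrix.diagonal fun a => M.T a a := by
    ext a b
    by_cases hab : a = b
    · subst hab; simp
    · rw [Matrix.diagonal_apply_ne _ hab, M.T_diag a b hab]
  rw [hT, Matrix.diagonal_pow] at h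
  have := congrFun (congrFun h a) a
  simpa using this

lemma T_ne (a : Φ) : M.T a a ≠ 0 := by
  obtain ⟨m, hm, h⟩ := M.T_pow
  intro h0
  have := h a
  rw [h0, zero_pow hm.ne'] at this
  exact zero_ne_one this

lemma T_norm (a : Φ) : ‖M.T a a‖ = 1 := by
  obtain ⟨m, hm, h⟩ := M.T_pow
  exact Complex.norm_eq_one_of_pow_eq_one (h a) hm.ne'

lemma STS (a b : Φ) : M.T a a * (∑ c, M.S a c * M.T c c * M.S c b) * M.T b b = M.S a b := by
  have hT : M.T = Matrix.diagonal fun a => M.T a a := by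
    ext a b
    by_cases hab : a = b
    · subst hab; simp
    · rw [Matrix.diagonal_apply_ne _ hab, M.T_diag a b hab]
  have h : M.S = M.T * (M.S * M.T * M.S) * M.T := by
    have h1 : M.S.conjTranspose * M.S = 1 := mul_eq_one_comm.mp M.S_unitary
    have h2 := congrArg (fun X => M.S.conjTranspose * X) M.modular_rel
    simp only [pow_succ, pow_zero, one_mul] at h2
    simp only [← mul_assoc] at h2
    rw [h1] at h2
    simpa [mul_assoc] using h2
  have h3 := congrFun (congrFun h a) b
  conv_rhs => rw [h3]
  rw [hT]
  simp [Matrix.mul_apply, Matrix.diagonal_apply]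

/-- An embedding that fixes the entries of `T` changes the entries of `S` only by signs. -/
lemma core_sign {F : Type} [Field F] (i τ : F →+* ℂ) (s : Φ → Φ → F) (t : Φ → F)
    (hs : ∀ a b, i (s a b) = M.S a b) (ht : ∀ a, i (t a) = M.T a a)
    (hτ : ∀ a, τ (t a) = M.T a a) (a b : Φ) : τ (s a b) = M.S a b ∨ τ (s a b) = - M.S a b := by
  obtain ⟨g, ε, hε, h⟩ := M.core_galois i τ s hs
  have hεε : ∀ a, ε a * ε a = 1 := fun a => by rcases hε a with h | h <;> rw [h] <;> norm_num
  let D : Φ → ℂ := fun a => M.T (g a) (g a) / M.T a a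
  have hD : ∀ a, ‖D a‖ = 1 := fun a => by simp [D, M.T_norm]
  have hsts : ∀ a b, t a * (∑ c, s a c * t c * s c b) * t b = s a b := by
    intro a b
    apply i.injective
    simp only [map_mul, map_sum, hs, ht]
    exact M.STS a b
  have h1 : ∀ a b, τ (s (g a) b) = D a * D b * M.S (g a) b := by
    intro a b
    have e1 := congrArg τ (hsts a b)
    simp only [map_mul, map_sum, hτ] at e1
    have e2 : ∑ c, τ (s a c) * M.T c c * τ (s c b)
        = ε a * ε b * ∑ c, M.S (g a) c * M.T c c * M.S c (g b) := by
      rw [Finset.mul_sum]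
      refine Finset.sum_congr rfl fun c _ => ?_
      rw [(h a c).1, (h c b).2]
      ring
    have e3 := M.STS (g a) (g b)
    rw [e2, (h a b).1] at e1
    rw [(h (g a) b).2]
    have n1 := M.T_ne a
    have n2 := M.T_ne b
    have n3 : ε a ≠ 0 := fun h0 => by simpa [h0] using hεε a
    simp only [D]
    have e4 : M.S (g a) b
        = M.T a a * (ε b * ∑ c, M.S (g a) c * M.T c c * M.S c (g b)) * M.T b b := by
      apply mul_left_cancel₀ n3
      rw [← e1]
      ring
    rw [e4, ← e3]
    field_simp
  let E : Φ → ℂ := fun c => D (g.symm c)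
  have hE : ∀ a, ‖E a‖ = 1 := fun a => hD _
  have h2 : ∀ c b, τ (s c b) = E c * D b * M.S c b := by
    intro c b
    have := h1 (g.symm c) b
    simpa [E] using this
  have hsym : ∀ a b, s a b = s b a := fun a b => i.injective (by rw [hs, hs, M.S_symm])
  -- real of norm one
  have hreal : ∀ z : ℂ, ‖z‖ = 1 → (starRingEnd ℂ) z = z → z = 1 ∨ z = -1 := by
    intro z hz hc
    apply mul_self_eq_one_iff.mp
    have := Complex.mul_conj z
    rw [hc, Complex.normSq_eq_norm_sq, hz] at this
    simpa using this
  have h3 : ∀ b, E M.zero * D b = 1 ∨ E M.zero * D b = -1 := by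
    intro b
    apply hreal
    · simp [hE, hD]
    · have e1 := h2 M.zero b
      rw [(h M.zero b).2] at e1
      have e2 := congrArg (starRingEnd ℂ) e1
      simp only [map_mul, M.S0_conj] at e2
      have e3 : (starRingEnd ℂ) (ε b) = ε b := by rcases hε b with h | h <;> simp [h]
      rw [e3, e1] at e2
      rw [map_mul]
      exact (mul_right_cancel₀ (M.S0_ne b) e2).symm
  have h4 : ∀ c, E c * D M.zero = 1 ∨ E c * D M.zero = -1 := by
    intro c
    have e1 : E c * D M.zero = E M.zero * D c := by
      apply mul_right_cancel₀ (M.S0_ne c)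
      rw [← h2 M.zero c, hsym, h2, M.S_symm M.zero c]
    rw [e1]
    exact h3 c
  have h5 : E a * D b = 1 ∨ E a * D b = -1 := by
    have e1 : E a * D b = (E a * D M.zero) * (E M.zero * D b) * (E M.zero * D M.zero) := by
      have e2 : (E M.zero * D M.zero) * (E M.zero * D M.zero) = 1 := by
        rcases h3 M.zero with h | h <;> rw [h] <;> norm_num
      linear_combination (- E a * D b) * e2
    rw [e1]
    rcases h4 a with h | h <;> rcases h3 b with h' | h' <;> rcases h3 M.zero with h'' | h'' <;>
      rw [h, h', h''] <;> norm_num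
  rw [h2]
  rcases h5 with h | h <;> rw [h] <;> simp
end ModularData
namespace CycAux
variable {Ω : Type} [Field Ω] [Algebra ℚ Ω]

/-- The field generated by the `n`-th roots of unity. -/
def cyc (Ω : Type) [Field Ω] [Algebra ℚ Ω] (n : ℕ) : IntermediateField ℚ Ω :=
  IntermediateField.adjoin ℚ {z : Ω | z ^ n = 1}

/-- The field generated by all roots of unity. -/
def cycAll (Ω : Type) [Field Ω] [Algebra ℚ Ω] : IntermediateField ℚ Ω :=
  IntermediateField.adjoin ℚ {z : Ω | ∃ n : ℕ, 0 < n ∧ z ^ n = 1}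

lemma root_mem_cyc {n : ℕ} {z : Ω} (h : z ^ n = 1) : z ∈ cyc Ω n :=
  IntermediateField.subset_adjoin _ _ h

lemma root_mem_cycAll {n : ℕ} (hn : 0 < n) {z : Ω} (h : z ^ n = 1) : z ∈ cycAll Ω :=
  IntermediateField.subset_adjoin _ _ ⟨n, hn, h⟩

lemma cyc_le_cycAll {n : ℕ} (hn : 0 < n) : cyc Ω n ≤ cycAll Ω :=
  IntermediateField.adjoin.mono _ _ _ fun _ hz => ⟨n, hn, hz⟩

lemma cyc_mono {n m : ℕ} (h : n ∣ m) : cyc Ω n ≤ cyc Ω m := by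
  apply IntermediateField.adjoin.mono
  intro z hz
  obtain ⟨k, rfl⟩ := h
  simp only [Set.mem_ofPred_eq] at hz ⊢
  rw [pow_mul, hz, one_pow]

/-- Two automorphisms that agree on the generators agree on the field. -/
lemma eq_on_adjoin {s : Set Ω} (σ τ : Ω ≃ₐ[ℚ] Ω) (h : ∀ z ∈ s, σ z = τ z) :
    ∀ y ∈ IntermediateField.adjoin ℚ s, σ y = τ y := by
  intro y hy
  induction hy using IntermediateField.adjoin_induction with
  | mem x hx => exact h x hx
  | algebraMap x => simp
  | add x y _ _ hx hy => simp [hx, hy]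
  | inv x _ hx => simp [hx]
  | mul x y _ _ hx hy => simp [hx, hy]

lemma cyc_stable {n : ℕ} (σ : Ω ≃ₐ[ℚ] Ω) : ∀ y ∈ cyc Ω n, σ y ∈ cyc Ω n := by
  intro y hy
  induction hy using IntermediateField.adjoin_induction with
  | mem x hx => exact root_mem_cyc (by rw [← map_pow, show x ^ n = 1 from hx, map_one])
  | algebraMap x => simp
  | add x y _ _ hx hy => rw [map_add]; exact add_mem hx hy
  | inv x _ hx => rw [map_inv₀]; exact inv_mem hx
  | mul x y _ _ hx hy => rw [map_mul]; exact mul_mem hx hy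

lemma eq_on_cyc {n : ℕ} [NeZero n] {η : Ω} (hη : IsPrimitiveRoot η n) (σ τ : Ω ≃ₐ[ℚ] Ω)
    (h : σ η = τ η) : ∀ y ∈ cyc Ω n, σ y = τ y := by
  apply eq_on_adjoin
  intro z hz
  obtain ⟨i, -, rfl⟩ := hη.eq_pow_of_pow_eq_one hz
  simp [h]

lemma aut_root {n : ℕ} [NeZero n] {η : Ω} (hη : IsPrimitiveRoot η n) (σ : Ω ≃ₐ[ℚ] Ω) :
    ∃ u : ℕ, u.Coprime n ∧ σ η = η ^ u := by
  have h1 : IsPrimitiveRoot (σ η) n := hη.map_of_injective σ.injective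
  obtain ⟨i, -, hi⟩ := hη.eq_pow_of_pow_eq_one h1.pow_eq_one
  refine ⟨i, ?_, hi.symm⟩
  rw [← hi] at h1
  exact (hη.pow_iff_coprime (NeZero.pos n) i).mp h1

lemma cyc_comm {n : ℕ} (hn : 0 < n) {η : Ω} (hη : IsPrimitiveRoot η n) (σ τ : Ω ≃ₐ[ℚ] Ω) :
    ∀ y ∈ cyc Ω n, σ (τ y) = τ (σ y) := by
  have : NeZero n := ⟨hn.ne'⟩
  obtain ⟨u, -, hu⟩ := aut_root hη σ
  obtain ⟨v, -, hv⟩ := aut_root hη τ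
  intro y hy
  have := eq_on_cyc hη (σ * τ) (τ * σ) (by
    simp only [AlgEquiv.mul_apply, hu, hv, map_pow]
    rw [← pow_mul, ← pow_mul, mul_comm]) y hy
  simpa using this

lemma exists_aut [IsGalois ℚ Ω] {n : ℕ} (hn : 0 < n) {η : Ω} (hη : IsPrimitiveRoot η n) {u : ℕ}
    (hu : u.Coprime n) : ∃ σ : Ω ≃ₐ[ℚ] Ω, σ η = η ^ u := by
  have : CharZero Ω := algebraRat.charZero Ω
  have h2 : IsPrimitiveRoot (η ^ u) n := hη.pow_of_coprime u hu
  have h3 : IsConjRoot ℚ (η ^ u) η := by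
    rw [isConjRoot_def]
    have e1 := Polynomial.cyclotomic_eq_minpoly_rat hη hn
    have e2 := Polynomial.cyclotomic_eq_minpoly_rat h2 hn
    have : (DivisionRing.toRatAlgebra : Algebra ℚ Ω) = ‹Algebra ℚ Ω› := Subsingleton.elim _ _
    rw [this] at e1 e2
    rw [← e1, ← e2]
  obtain ⟨σ, hσ⟩ := isConjRoot_iff_exists_algEquiv.mp h3
  exact ⟨σ, by rw [hσ]⟩

lemma fix_mem [IsGalois ℚ Ω] (K : IntermediateField ℚ Ω) (x : Ω)
    (h : ∀ σ : Ω ≃ₐ[ℚ] Ω, (∀ y ∈ K, σ y = y) → σ x = x) : x ∈ K := by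
  rw [← InfiniteGalois.fixedField_fixingSubgroup K, IntermediateField.mem_fixedField_iff]
  intro σ hσ
  exact h σ ((IntermediateField.mem_fixingSubgroup_iff K σ).mp hσ)

lemma sq_fix_sign (K : IntermediateField ℚ Ω) {x : Ω} (hsq : x ^ 2 ∈ K) (τ : Ω ≃ₐ[ℚ] Ω)
    (hτ : ∀ y ∈ K, τ y = y) : τ x = x ∨ τ x = - x := by
  have := hτ _ hsq
  rw [map_pow] at this
  exact sq_eq_sq_iff_eq_or_eq_neg.mp this

lemma ratio_mem [IsGalois ℚ Ω] (K : IntermediateField ℚ Ω) {x : Ω} (hsq : x ^ 2 ∈ K)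
    (hcomm : ∀ σ τ : Ω ≃ₐ[ℚ] Ω, σ (τ x) = τ (σ x)) (σ : Ω ≃ₐ[ℚ] Ω) : σ x / x ∈ K := by
  apply fix_mem
  intro τ hτ
  rw [map_div₀, ← hcomm]
  rcases sq_fix_sign K hsq τ hτ with h | h
  · rw [h]
  · rw [h, map_neg, neg_div_neg_eq]

/-- One descent step (a form of Hilbert 90). -/
lemma step [IsGalois ℚ Ω] (K K' : IntermediateField ℚ Ω) (t : Ω ≃ₐ[ℚ] Ω) (r : ℕ)
    (hK : ∀ σ : Ω ≃ₐ[ℚ] Ω, ∀ y ∈ K, σ y ∈ K)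
    (habel : ∀ σ τ : Ω ≃ₐ[ℚ] Ω, ∀ y ∈ K, σ (τ y) = τ (σ y))
    (hdist : ∀ i < r, ∀ j < r, (∀ y ∈ K, (t ^ i) y = (t ^ j) y) → i = j)
    (hr : 0 < r)
    {x : Ω} (hx : x ≠ 0) (hsq : x ^ 2 ∈ K)
    (hcomm : ∀ σ τ : Ω ≃ₐ[ℚ] Ω, σ (τ x) = τ (σ x))
    (htr : (t ^ r) x = x) (htK : ∀ y ∈ K, (t ^ r) y = y)
    (hgal : ∀ σ : Ω ≃ₐ[ℚ] Ω, (∀ y ∈ K', σ y = y) → ∃ i : ℕ, ∀ y ∈ K, σ y = (t ^ i) y) :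
    ∃ k ∈ K, k ≠ 0 ∧ (x * k) ^ 2 ∈ K' ∧
      ∀ σ τ : Ω ≃ₐ[ℚ] Ω, σ (τ (x * k)) = τ (σ (x * k)) := by
  -- the multiplicative characters `t ^ i` on `K` are independent
  let f : Fin r → (K →* Ω) := fun i => ((t ^ (i : ℕ) : Ω ≃ₐ[ℚ] Ω) : Ω →* Ω).comp
    ((algebraMap K Ω : K →+* Ω) : K →* Ω)
  have hfinj : Function.Injective f := by
    intro i j hij
    apply Fin.ext
    apply hdist _ i.2 _ j.2
    intro y hy
    have := DFunLike.congr_fun hij (⟨y, hy⟩ : K)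
    simpa [f] using this
  have hli : LinearIndependent Ω (fun i => (f i : K → Ω)) :=
    (linearIndependent_monoidHom K Ω).comp f hfinj
  have hex : ∃ θ ∈ K, ∑ i : Fin r, ((t ^ (i : ℕ)) x) * (t ^ (i : ℕ)) θ ≠ 0 := by
    by_contra hcon
    push Not at hcon
    have := Fintype.linearIndependent_iff.mp hli (fun i => (t ^ (i : ℕ)) x) (by
      ext θ
      have := hcon θ.1 θ.2
      simpa [f] using this) ⟨0, hr⟩
    simp at this
    exact hx this
  obtain ⟨θ, hθ, hne⟩ := hex
  set y := ∑ i : Fin r, ((t ^ (i : ℕ)) x) * (t ^ (i : ℕ)) θ with hy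
  have hy' : y = ∑ i ∈ Finset.range r, (t ^ i) (x * θ) := by
    rw [hy, Finset.sum_range]
    refine Finset.sum_congr rfl fun i _ => ?_
    rw [map_mul]
  have hty : t y = y := by
    have h1 := Finset.sum_range_succ (fun i => (t ^ i) (x * θ)) r
    have h2 := Finset.sum_range_succ' (fun i => (t ^ i) (x * θ)) r
    have h3 : (t ^ r) (x * θ) = x * θ := by rw [map_mul, htr, htK θ hθ]
    have h4 : t y = ∑ i ∈ Finset.range r, (t ^ (i + 1)) (x * θ) := by
      rw [hy', map_sum]
      refine Finset.sum_congr rfl fun i _ => ?_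
      rw [pow_succ', AlgEquiv.mul_apply]
    rw [h4, hy']
    rw [h1, h3] at h2
    simpa using h2.symm
  have hk : y / x ∈ K := by
    have : y / x = ∑ i : Fin r, ((t ^ (i : ℕ)) x) / x * (t ^ (i : ℕ)) θ := by
      rw [hy, Finset.sum_div]
      refine Finset.sum_congr rfl fun i _ => ?_
      ring
    rw [this]
    exact sum_mem fun i _ => mul_mem (ratio_mem K hsq hcomm _) (hK _ _ hθ)
  have hxk : x * (y / x) = y := mul_div_cancel₀ y hx
  refine ⟨y / x, hk, div_ne_zero hne hx, ?_, ?_⟩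
  · apply fix_mem
    intro σ hσ
    obtain ⟨i, hi⟩ := hgal σ hσ
    rw [hi _ (by rw [mul_pow]; exact mul_mem hsq (pow_mem hk 2)), hxk, map_pow]
    congr 1
    clear hi
    induction i with
    | zero => simp
    | succ i ih => rw [pow_succ, AlgEquiv.mul_apply, hty, ih]
  · intro σ τ
    simp only [map_mul]
    rw [hcomm, habel _ _ _ hk]

lemma mem_of_sq_eq {K : IntermediateField ℚ Ω} {x y : Ω} (h : x ^ 2 = y ^ 2) (hy : y ∈ K) :
    x ∈ K := by
  rcases sq_eq_sq_iff_eq_or_eq_neg.mp h with h | h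
  · rwa [h]
  · rw [h]; exact neg_mem hy

lemma sqrt_neg_one_mem {x : Ω} (h : x ^ 2 = -1) : x ∈ cycAll Ω :=
  root_mem_cycAll (n := 4) (by norm_num) (by linear_combination (x ^ 2 - 1) * h)

lemma sqrt_prime_mem [IsAlgClosed Ω] (p : ℕ) (hp : p.Prime) (x : Ω) (h : x ^ 2 = p) :
    x ∈ cycAll Ω := by
  have : CharZero Ω := algebraRat.charZero Ω
  have : Fact p.Prime := ⟨hp⟩
  by_cases hp2 : p = 2
  · subst hp2
    obtain ⟨ζ, hζ⟩ := IsAlgClosed.exists_pow_nat_eq (-1 : Ω) (n := 4) (by norm_num)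
    have h0 : ζ ≠ 0 := fun h => by simp [h] at hζ
    have h1 : ζ ∈ cycAll Ω := root_mem_cycAll (n := 8) (by norm_num)
      (by linear_combination (ζ ^ 4 - 1) * hζ)
    refine mem_of_sq_eq (y := ζ + ζ⁻¹) ?_ (add_mem h1 (inv_mem h1))
    rw [h]
    push_cast
    field_simp
    linear_combination -hζ
  · obtain ⟨ζ, hζ⟩ := HasEnoughRootsOfUnity.exists_primitiveRoot Ω p
    let ψ : AddChar (ZMod p) Ω := AddChar.zmodChar p hζ.pow_eq_one
    have hψ : ψ.IsPrimitive := AddChar.zmodChar_primitive_of_primitive_root p hζ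
    let χ : MulChar (ZMod p) Ω := (quadraticChar (ZMod p)).ringHomComp (Int.castRingHom Ω)
    have hχ1 : χ ≠ 1 := by
      apply (MulChar.ringHomComp_ne_one_iff (RingHom.injective_int _)).mpr
      exact quadraticChar_ne_one (by rwa [ZMod.ringChar_zmod_n])
    have hχ2 : χ.IsQuadratic := (quadraticChar_isQuadratic (ZMod p)).comp _
    have hg := gaussSum_sq hχ1 hχ2 hψ
    rw [ZMod.card] at hg
    have hmem : gaussSum χ ψ ∈ cycAll Ω := by
      refine sum_mem fun a _ => mul_mem ?_ ?_
      · rcases hχ2 a with h | h | h <;> rw [h]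
        · exact zero_mem _
        · exact one_mem _
        · exact neg_mem (one_mem _)
      · apply root_mem_cycAll hp.pos
        rw [← AddChar.map_nsmul_eq_pow]
        simp
    rcases hχ2 (-1) with h1 | h1 | h1
    · rw [h1, zero_mul] at hg
      have : χ (-1) ≠ 0 := (IsUnit.map χ isUnit_one.neg).ne_zero
      exact absurd h1 this
    · rw [h1, one_mul, ← h] at hg
      exact mem_of_sq_eq hg.symm hmem
    · obtain ⟨I, hI⟩ := IsAlgClosed.exists_pow_nat_eq (-1 : Ω) (n := 2) (by norm_num)
      rw [h1, ← h] at hg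
      refine mem_of_sq_eq (y := I * gaussSum χ ψ) ?_ (mul_mem (sqrt_neg_one_mem hI) hmem)
      rw [mul_pow, hg, hI]
      ring

lemma sqrt_nat_mem [IsAlgClosed Ω] (n : ℕ) : ∀ x : Ω, x ^ 2 = n → x ∈ cycAll Ω := by
  induction n using Nat.recOnMul with
  | zero =>
    intro x hx
    have : x = 0 := by simpa using hx
    rw [this]; exact zero_mem _
  | one => intro x hx; exact mem_of_sq_eq (y := 1) (by simpa using hx) (one_mem _)
  | prime p hp => exact sqrt_prime_mem p hp
  | mul a b ha hb =>
    intro x hx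
    obtain ⟨u, hu⟩ := IsAlgClosed.exists_pow_nat_eq (a : Ω) (n := 2) (by norm_num)
    obtain ⟨v, hv⟩ := IsAlgClosed.exists_pow_nat_eq (b : Ω) (n := 2) (by norm_num)
    refine mem_of_sq_eq (y := u * v) ?_ (mul_mem (ha u hu) (hb v hv))
    rw [hx, mul_pow, hu, hv]; push_cast; ring

lemma sqrt_int_mem [IsAlgClosed Ω] (n : ℤ) (x : Ω) (h : x ^ 2 = n) : x ∈ cycAll Ω := by
  rcases Int.eq_nat_or_neg n with ⟨k, rfl | rfl⟩
  · exact sqrt_nat_mem k x (by simpa using h)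
  · obtain ⟨I, hI⟩ := IsAlgClosed.exists_pow_nat_eq (-1 : Ω) (n := 2) (by norm_num)
    have hI0 : I ≠ 0 := fun h => by simp [h] at hI
    have h1 : I * x ∈ cycAll Ω := by
      apply sqrt_nat_mem k
      rw [mul_pow, h, hI]; push_cast; ring
    have h2 := mul_mem (inv_mem (sqrt_neg_one_mem hI)) h1
    rwa [inv_mul_cancel_left₀ hI0] at h2

lemma sqrt_bot_mem [IsAlgClosed Ω] (x : Ω) (h : x ^ 2 ∈ (⊥ : IntermediateField ℚ Ω)) :
    x ∈ cycAll Ω := by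
  have : CharZero Ω := algebraRat.charZero Ω
  obtain ⟨q, hq⟩ := IntermediateField.mem_bot.mp h
  have hq' : x ^ 2 = (q : Ω) := by rw [← hq]; simp
  have hd : (q.den : Ω) ≠ 0 := by exact_mod_cast q.den_ne_zero
  have h1 : x * q.den ∈ cycAll Ω := by
    apply sqrt_int_mem (q.num * q.den)
    have : (q : Ω) = q.num / q.den := Rat.cast_def q
    rw [mul_pow, hq', this]
    push_cast
    field_simp
  have h2 := div_mem h1 (natCast_mem (cycAll Ω) q.den)
  rwa [mul_div_cancel_right₀ _ hd] at h2

end CycAux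
namespace CycAux
open NumberField

section localpart
variable {K : Type} [Field K] [NumberField K]

lemma coe_smul_int (σ : K ≃ₐ[ℚ] K) (a : 𝓞 K) : ((σ • a : 𝓞 K) : K) = σ (a : K) := rfl

lemma telescope (σ : K ≃ₐ[ℚ] K) {α w : K} (hα : α ≠ 0) (h : w = σ α / α) (n : ℕ) :
    ∏ i ∈ Finset.range n, (σ ^ i) w = (σ ^ n) α / α := by
  induction n with
  | zero => simp [div_self hα]
  | succ n ih =>
    have h1 : (σ ^ n) α ≠ 0 := (map_ne_zero (σ ^ n)).mpr hα
    rw [Finset.prod_range_succ, ih, h, map_div₀, pow_succ, AlgEquiv.mul_apply]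
    field_simp

lemma pow_smul_mem_iff (P : Ideal (𝓞 K)) (σ : K ≃ₐ[ℚ] K) (hσ : ∀ a : 𝓞 K, σ • a ∈ P ↔ a ∈ P)
    (n : ℕ) (a : 𝓞 K) : (σ ^ n) • a ∈ P ↔ a ∈ P := by
  induction n with
  | zero => simp
  | succ n ih => rw [pow_succ', mul_smul, hσ, ih]

lemma unit_of_ratio (P : IsDedekindDomain.HeightOneSpectrum (𝓞 K)) (σ : K ≃ₐ[ℚ] K)
    (hσ : ∀ a : 𝓞 K, σ • a ∈ P.asIdeal ↔ a ∈ P.asIdeal) {α w : K} (hα : α ≠ 0)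
    (h : w ^ 2 = σ α / α) :
    ∃ a b : 𝓞 K, a ∉ P.asIdeal ∧ b ∉ P.asIdeal ∧ w * b = a := by
  have hP := P.isPrime
  have hN : 0 < orderOf σ := orderOf_pos σ
  have h1 := telescope σ hα h (orderOf σ)
  rw [pow_orderOf_eq_one] at h1
  simp only [AlgEquiv.one_apply, div_self hα] at h1
  -- `w = a / b` with one of them a unit
  have key : ∀ a b : 𝓞 K, w * b = a → (a ∈ P.asIdeal ↔ b ∈ P.asIdeal) := by
    intro a b hab
    have h2 : ∏ i ∈ Finset.range (orderOf σ), ((σ ^ i) • a) ^ 2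
        = ∏ i ∈ Finset.range (orderOf σ), ((σ ^ i) • b) ^ 2 := by
      apply RingOfIntegers.ext
      simp only [map_prod, map_pow, coe_smul_int, ← hab]
      calc ∏ i ∈ Finset.range (orderOf σ), ((σ ^ i) (w * (b : K))) ^ 2
          = (∏ i ∈ Finset.range (orderOf σ), (σ ^ i) (w ^ 2)) *
              ∏ i ∈ Finset.range (orderOf σ), ((σ ^ i) (b : K)) ^ 2 := by
            rw [← Finset.prod_mul_distrib]
            refine Finset.prod_congr rfl fun i _ => ?_
            rw [map_mul, map_pow]
            ring
        _ = _ := by rw [h1, one_mul]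
    have h3 : ∀ c : 𝓞 K, (∏ i ∈ Finset.range (orderOf σ), ((σ ^ i) • c) ^ 2) ∈ P.asIdeal
        ↔ c ∈ P.asIdeal := by
      intro c
      rw [hP.prod_mem_iff]
      constructor
      · rintro ⟨i, -, hi⟩
        exact (pow_smul_mem_iff _ σ hσ i c).mp (hP.mem_of_pow_mem 2 hi)
      · intro hc
        exact ⟨0, Finset.mem_range.mpr hN, by
          simpa using Ideal.pow_mem_of_mem _ hc 2 (by norm_num)⟩
    rw [← h3 a, ← h3 b, h2]
  obtain ⟨n, d, hnd⟩ := P.exists_primeCompl_mul_eq_or_mul_eq w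
  have hd : (d : 𝓞 K) ∉ P.asIdeal := d.2
  have hw : w ≠ 0 := by
    intro h0
    rw [h0] at h
    have : σ α / α ≠ 0 := div_ne_zero (by simpa using hα) hα
    exact this (by rw [← h]; norm_num)
  rcases hnd with hnd | hnd
  · exact ⟨n, d, fun hn => hd ((key _ _ hnd).mp hn), hd, hnd⟩
  · have : w * n = (d : 𝓞 K) := hnd
    exact ⟨d, n, hd, fun hn => hd ((key _ _ this).mpr hn), this⟩

lemma local_contra (P : IsDedekindDomain.HeightOneSpectrum (𝓞 K)) {p : ℕ} (hp : p.Prime)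
    (hp2 : p ≠ 2) (hpP : (p : 𝓞 K) ∈ P.asIdeal) (φ t : K ≃ₐ[ℚ] K)
    (hφ : ∀ a : 𝓞 K, φ • a - a ^ p ∈ P.asIdeal) (ht : ∀ a : 𝓞 K, t • a - a ∈ P.asIdeal)
    {α z w : K} (hα : α ≠ 0) (hz : z ^ 2 = t α / α) (hw : w ^ 2 = φ α / α)
    (hzw : t w * z = φ z * w) (r q : ℕ) (hr : r = (p - 1) * q)
    (hprod : ∏ i ∈ Finset.range r, (t ^ i) z = -1) : False := by
  have hP := P.isPrime
  have hφ' : ∀ a : 𝓞 K, φ • a ∈ P.asIdeal ↔ a ∈ P.asIdeal := by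
    intro a
    have h0 := hφ a
    constructor
    · intro h
      have : a ^ p ∈ P.asIdeal := by simpa using sub_mem h h0
      exact hP.mem_of_pow_mem p this
    · intro h
      have : a ^ p ∈ P.asIdeal := Ideal.pow_mem_of_mem _ h p hp.pos
      simpa using add_mem h0 this
  have ht' : ∀ a : 𝓞 K, t • a ∈ P.asIdeal ↔ a ∈ P.asIdeal := by
    intro a
    have := ht a
    constructor
    · intro h; simpa using sub_mem h this
    · intro h; simpa using add_mem this h
  obtain ⟨a, b, ha, hb, hab⟩ := unit_of_ratio P t ht' hα hz
  obtain ⟨c, d, hc, hd, hcd⟩ := unit_of_ratio P φ hφ' hα hw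
  let π := Ideal.Quotient.mk P.asIdeal
  have ne : ∀ x : 𝓞 K, x ∉ P.asIdeal → π x ≠ 0 := fun x hx h =>
    hx (Ideal.Quotient.eq_zero_iff_mem.mp h)
  have πφ : ∀ x : 𝓞 K, π (φ • x) = π x ^ p := fun x => by
    rw [← map_pow]; exact Ideal.Quotient.eq.mpr (hφ x)
  have πt : ∀ x : 𝓞 K, π (t • x) = π x := fun x => Ideal.Quotient.eq.mpr (ht x)
  have e1 : (t • c) * a * (φ • b) * d = (φ • a) * c * b * (t • d) := by
    apply RingOfIntegers.ext
    simp only [map_mul, coe_smul_int, ← hab, ← hcd]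
    linear_combination (t d * b * φ b * d : K) * hzw
  have e2 := congrArg π e1
  simp only [map_mul, πφ, πt] at e2
  have e3 : π a * π b ^ p = π a ^ p * π b := by
    apply mul_right_cancel₀ (mul_ne_zero (ne c hc) (ne d hd))
    linear_combination e2
  have hp1 : p = (p - 1) + 1 := (Nat.sub_add_cancel hp.one_le).symm
  have e4 : π a ^ (p - 1) = π b ^ (p - 1) := by
    have q1 : ∀ y : 𝓞 K ⧸ P.asIdeal, y ^ p = y ^ (p - 1) * y := fun y => by
      rw [← pow_succ, ← hp1]
    rw [q1, q1] at e3
    apply mul_right_cancel₀ (mul_ne_zero (ne a ha) (ne b hb))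
    linear_combination -e3
  have e5 : ∏ i ∈ Finset.range r, ((t ^ i) • a) = - ∏ i ∈ Finset.range r, ((t ^ i) • b) := by
    apply RingOfIntegers.ext
    simp only [map_prod, map_neg, coe_smul_int, ← hab, map_mul, Finset.prod_mul_distrib, hprod]
    ring
  have πti : ∀ (i : ℕ) (x : 𝓞 K), π ((t ^ i) • x) = π x := by
    intro i x
    induction i with
    | zero => simp
    | succ i ih => rw [pow_succ', mul_smul, πt, ih]
  have e6 := congrArg π e5
  simp only [map_prod, map_neg, πti, Finset.prod_const, Finset.card_range] at e6
  rw [hr, pow_mul, pow_mul, e4] at e6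
  have e7 : (2 : 𝓞 K ⧸ P.asIdeal) = 0 := by
    apply (mul_eq_zero.mp (_ : 2 * (π b ^ (p - 1)) ^ q = 0)).resolve_right
    · exact pow_ne_zero _ (pow_ne_zero _ (ne b hb))
    · linear_combination e6
  have e8 : (p : 𝓞 K ⧸ P.asIdeal) = 0 := by
    have := Ideal.Quotient.eq_zero_iff_mem.mpr hpP
    simpa using this
  obtain ⟨k, hk⟩ := hp.odd_of_ne_two hp2
  rw [hk] at e8
  push_cast at e8
  rw [e7, zero_mul, zero_add] at e8
  exact one_ne_zero e8

lemma local_exists {m m' p k u : ℕ} [NeZero m] (hp : p.Prime) (hm : m = p ^ k * m')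
    [IsCyclotomicExtension {m} ℚ K] {η : K} (hη : IsPrimitiveRoot η m) (t : K ≃ₐ[ℚ] K)
    (ht : t η = η ^ u) (hu : u ≡ 1 [MOD m']) :
    ∃ (P : IsDedekindDomain.HeightOneSpectrum (𝓞 K)) (φ : K ≃ₐ[ℚ] K),
      (p : 𝓞 K) ∈ P.asIdeal ∧ (∀ a : 𝓞 K, φ • a - a ^ p ∈ P.asIdeal) ∧
      (∀ a : 𝓞 K, t • a - a ∈ P.asIdeal) := by
  have hpu : ¬ IsUnit (p : 𝓞 K) := by
    intro h
    have h2 : IsUnit (Algebra.norm ℤ (p : 𝓞 K)) := h.map _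
    have h3 : (p : 𝓞 K) = algebraMap ℤ (𝓞 K) (p : ℤ) := by simp
    rw [h3, Algebra.norm_algebraMap, isUnit_pow_iff (Module.finrank_pos).ne',
      Int.isUnit_iff] at h2
    have := hp.one_lt
    omega
  obtain ⟨Q, hQ, hpQ⟩ := exists_max_ideal_of_mem_nonunits hpu
  have hp0 : (p : 𝓞 K) ≠ 0 := by exact_mod_cast hp.ne_zero
  let P : IsDedekindDomain.HeightOneSpectrum (𝓞 K) :=
    ⟨Q, hQ.isPrime, fun h => hp0 (by rw [h] at hpQ; simpa using hpQ)⟩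
  have : Q.IsPrime := hQ.isPrime
  have : Finite (𝓞 K ⧸ Q) := Ideal.finiteQuotientOfFreeOfNeBot Q P.ne_bot
  have : IsGalois ℚ K := IsCyclotomicExtension.isGalois {m} ℚ K
  obtain ⟨φ, hφ⟩ := IsArithFrobAt.exists_of_isInvariant ℤ (K ≃ₐ[ℚ] K) Q
  have hcard : Nat.card (ℤ ⧸ Q.under ℤ) = p := by
    have hmem : (p : ℤ) ∈ Q.under ℤ := by
      rw [Ideal.under_def, Ideal.mem_comap]
      simpa using hpQ
    have hle : Ideal.span {(p : ℤ)} ≤ Q.under ℤ := by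
      rwa [Ideal.span_singleton_le_iff_mem]
    have hmax : (Ideal.span {(p : ℤ)}).IsMaximal :=
      PrincipalIdealRing.isMaximal_of_irreducible (Nat.prime_iff_prime_int.mp hp).irreducible
    have hne : Q.under ℤ ≠ ⊤ := Ideal.IsPrime.ne_top inferInstance
    rw [← hmax.eq_of_le hne hle, Nat.card_congr (Int.quotientSpanNatEquivZMod p).toEquiv,
      Nat.card_zmod]
  refine ⟨P, φ, hpQ, fun a => ?_, ?_⟩
  · have := hφ a
    rw [hcard] at this
    exact this
  · have htop := IsCyclotomicExtension.Rat.adjoin_singleton_eq_top hη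
    intro a
    have ha : a ∈ (⊤ : Subalgebra ℤ (𝓞 K)) := trivial
    rw [← htop] at ha
    let π := Ideal.Quotient.mk Q
    have : Fact p.Prime := ⟨hp⟩
    have hch : CharP (𝓞 K ⧸ Q) p := by
      obtain ⟨q, hq⟩ := CharP.exists (𝓞 K ⧸ Q)
      have h0 : ((p : ℕ) : 𝓞 K ⧸ Q) = 0 := by
        have := Ideal.Quotient.eq_zero_iff_mem.mpr hpQ
        simpa using this
      rcases (Nat.dvd_prime hp).mp ((CharP.cast_eq_zero_iff _ q p).mp h0) with h1 | h1
      · exact absurd h1 (CharP.char_ne_one (𝓞 K ⧸ Q) q)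
      · rwa [← h1]
    suffices h : π (t • a) = π a from Ideal.Quotient.eq.mp h
    induction ha using Algebra.adjoin_induction with
    | mem x hx =>
      rw [Set.mem_singleton_iff] at hx
      have hx' : (x : K) = η := by rw [hx]; rfl
      have h1 : t • x = x ^ u := by
        apply RingOfIntegers.ext
        rw [coe_smul_int, hx', ht, ← hx']
        simp
      have hxm : x ^ m = 1 := by
        apply RingOfIntegers.ext
        have := hη.pow_eq_one
        rw [← hx'] at this
        simpa using this
      have h2 : (x ^ u) ^ (p ^ k) = x ^ (p ^ k) := by
        rw [← pow_mul]
        refine pow_eq_pow_of_modEq ?_ hxm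
        rw [hm]
        have := Nat.ModEq.mul_left' (p ^ k) hu
        rwa [mul_one, mul_comm (p ^ k) u] at this
      have h3 : (π (x ^ u) - π x) ^ (p ^ k) = 0 := by
        rw [sub_pow_char_pow, ← map_pow, h2, map_pow, sub_self]
      rw [h1]
      exact sub_eq_zero.mp (pow_eq_zero_iff (pow_pos hp.pos k).ne' |>.mp h3)
    | algebraMap x => rw [smul_algebraMap]
    | add x y _ _ hx hy => rw [smul_add, map_add, map_add, hx, hy]
    | mul x y _ _ hx hy => rw [smul_mul', map_mul, map_mul, hx, hy]
end localpart
end CycAux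
namespace CycAux
section oddpart

lemma local_final {K : Type} [Field K] [inst : Algebra ℚ K] {m m' p k u : ℕ} [NeZero m]
    (hp : p.Prime) (hp2 : p ≠ 2) (hm : m = p ^ k * m')
    [hcyc : IsCyclotomicExtension {m} ℚ K] {η : K} (hη : IsPrimitiveRoot η m) (t : K ≃ₐ[ℚ] K)
    (ht : t η = η ^ u) (hu : u ≡ 1 [MOD m']) :
    ∃ φ : K ≃ₐ[ℚ] K, ∀ α z w : K, α ≠ 0 → z ^ 2 = t α / α → w ^ 2 = φ α / α →
      t w * z = φ z * w → ∀ q : ℕ, ∏ i ∈ Finset.range ((p - 1) * q), (t ^ i) z = -1 → False := by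
  have hc : CharZero K := algebraRat.charZero K
  obtain rfl : inst = DivisionRing.toRatAlgebra := Subsingleton.elim _ _
  have : NumberField K := IsCyclotomicExtension.numberField {m} ℚ K
  obtain ⟨P, φ, h1, h2, h3⟩ := local_exists hp hm hη t ht hu
  exact ⟨φ, fun α z w hα hz hw hzw q hprod =>
    local_contra P hp hp2 h1 φ t h2 h3 hα hz hw hzw _ q rfl hprod⟩

variable {Ω : Type} [Field Ω] [Algebra ℚ Ω]

lemma isCyc {m : ℕ} [NeZero m] {η : Ω} (hη : IsPrimitiveRoot η m) :
    IsCyclotomicExtension {m} ℚ (cyc Ω m) := by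
  suffices h : cyc Ω m = IntermediateField.adjoin ℚ {η} by
    have h1 := (IntermediateField.isCyclotomicExtension_singleton_iff_eq_adjoin
      m ℚ Ω (cyc Ω m) hη).mpr h
    have e : DivisionRing.toRatAlgebra = (cyc Ω m).algebra' := Subsingleton.elim _ _
    rw [e]
    exact h1
  apply le_antisymm
  · apply IntermediateField.adjoin_le_iff.mpr
    intro z hz
    obtain ⟨i, -, rfl⟩ := hη.eq_pow_of_pow_eq_one hz
    exact pow_mem (IntermediateField.mem_adjoin_simple_self ℚ η) i
  · apply IntermediateField.adjoin_le_iff.mpr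
    rintro _ rfl
    exact root_mem_cyc hη.pow_eq_one

lemma pow_ratio (t : Ω ≃ₐ[ℚ] Ω) {x : Ω} (hx : x ≠ 0) (n : ℕ) :
    ∏ i ∈ Finset.range n, (t ^ i) (t x / x) = (t ^ n) x / x := by
  induction n with
  | zero => simp [div_self hx]
  | succ n ih =>
    have h1 : (t ^ n) x ≠ 0 := (map_ne_zero (t ^ n)).mpr hx
    rw [Finset.prod_range_succ, ih, map_div₀, pow_succ, AlgEquiv.mul_apply]
    field_simp

lemma odd_fix [IsGalois ℚ Ω] {m m' p k u q : ℕ} [NeZero m]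
    (hp : p.Prime) (hp2 : p ≠ 2) (hm : m = p ^ k * m')
    {η : Ω} (hη : IsPrimitiveRoot η m) (t : Ω ≃ₐ[ℚ] Ω)
    (ht : t η = η ^ u) (hu : u ≡ 1 [MOD m'])
    {x : Ω} (hx : x ≠ 0) (hsq : x ^ 2 ∈ cyc Ω m)
    (hcomm : ∀ σ τ : Ω ≃ₐ[ℚ] Ω, σ (τ x) = τ (σ x))
    (htK : ∀ y ∈ cyc Ω m, (t ^ ((p - 1) * q)) y = y) : (t ^ ((p - 1) * q)) x = x := by
  rcases sq_fix_sign _ hsq _ htK with h | h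
  · exact h
  exfalso
  have hcyc := isCyc hη
  have hgal : IsGalois ℚ (cyc Ω m) := IsCyclotomicExtension.isGalois {m} ℚ _
  let L := cyc Ω m
  let η' : L := ⟨η, root_mem_cyc hη.pow_eq_one⟩
  have hη' : IsPrimitiveRoot η' m := IsPrimitiveRoot.coe_submonoidClass_iff.mp hη
  let t' : L ≃ₐ[ℚ] L := t.restrictNormal L
  have ht'c : ∀ y : L, ((t' y : L) : Ω) = t (y : Ω) := fun y => t.restrictNormal_commutes L y
  have ht'p : ∀ (i : ℕ) (y : L), (((t' ^ i) y : L) : Ω) = (t ^ i) (y : Ω) := by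
    intro i
    induction i with
    | zero => intro y; rfl
    | succ i ih => intro y; rw [pow_succ, pow_succ, AlgEquiv.mul_apply, AlgEquiv.mul_apply, ih, ht'c]
  have ht' : t' η' = η' ^ u := by
    apply Subtype.ext
    rw [ht'c]
    exact ht
  obtain ⟨φ, hφ⟩ := local_final hp hp2 hm hη' t' ht' hu
  let φ' : Ω ≃ₐ[ℚ] Ω := φ.liftNormal Ω
  have hφ'c : ∀ y : L, ((φ y : L) : Ω) = φ' (y : Ω) := fun y => (φ.liftNormal_commutes Ω y).symm
  refine hφ ⟨x ^ 2, hsq⟩ ⟨t x / x, ratio_mem _ hsq hcomm t⟩ ⟨φ' x / x, ratio_mem _ hsq hcomm φ'⟩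
    ?_ ?_ ?_ ?_ q ?_
  · intro h0
    exact pow_ne_zero 2 hx (congrArg Subtype.val h0)
  · apply Subtype.ext
    show (t x / x) ^ 2 = ((t' ⟨x ^ 2, hsq⟩ : L) : Ω) / x ^ 2
    rw [ht'c, map_pow, div_pow]
  · apply Subtype.ext
    show (φ' x / x) ^ 2 = ((φ ⟨x ^ 2, hsq⟩ : L) : Ω) / x ^ 2
    rw [hφ'c, map_pow, div_pow]
  · apply Subtype.ext
    show ((t' _ : L) : Ω) * (t x / x) = ((φ _ : L) : Ω) * (φ' x / x)
    rw [ht'c, hφ'c]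
    simp only [map_div₀]
    rw [hcomm t φ']
    have h1 : t x ≠ 0 := (map_ne_zero t).mpr hx
    have h2 : φ' x ≠ 0 := (map_ne_zero φ').mpr hx
    field_simp
  · apply Subtype.ext
    have := pow_ratio t hx ((p - 1) * q)
    rw [h, neg_div, div_self hx] at this
    refine Eq.trans ?_ this
    refine (map_prod (algebraMap L Ω) _ _).trans ?_
    exact Finset.prod_congr rfl fun i _ => ht'p i _

lemma pow_eq_iff {m : ℕ} (hm : m ≠ 0) {η : Ω} (hη : IsPrimitiveRoot η m) (a b : ℕ) :
    η ^ a = η ^ b ↔ a ≡ b [MOD m] := by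
  wlog hab : a ≤ b generalizing a b
  · rw [eq_comm, this b a (le_of_not_ge hab)]
    exact ⟨Nat.ModEq.symm, Nat.ModEq.symm⟩
  have h0 : η ^ a ≠ 0 := pow_ne_zero a (hη.ne_zero hm)
  obtain ⟨c, rfl⟩ := Nat.exists_eq_add_of_le hab
  rw [pow_add, eq_comm, mul_eq_left₀ h0, hη.pow_eq_one_iff_dvd, Nat.modEq_iff_dvd' hab,
    Nat.add_sub_cancel_left]

lemma pow_apply {η : Ω} {u : ℕ} (t : Ω ≃ₐ[ℚ] Ω) (ht : t η = η ^ u) (i : ℕ) :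
    (t ^ i) η = η ^ (u ^ i) := by
  induction i with
  | zero => simp
  | succ i ih => rw [pow_succ', AlgEquiv.mul_apply, ih, map_pow, ht, ← pow_mul, pow_succ']

lemma odd_step [IsGalois ℚ Ω] [IsAlgClosed Ω] {m' p k : ℕ}
    (hp : p.Prime) (hp2 : p ≠ 2) (hk : 0 < k) (hm' : 0 < m') (hpm : ¬ p ∣ m')
    {x : Ω} (hx : x ≠ 0) (hsq : x ^ 2 ∈ cyc Ω (p ^ k * m'))
    (hcomm : ∀ σ τ : Ω ≃ₐ[ℚ] Ω, σ (τ x) = τ (σ x)) :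
    ∃ y ∈ cyc Ω (p ^ k * m'), y ≠ 0 ∧ (x * y) ^ 2 ∈ cyc Ω m' ∧
      ∀ σ τ : Ω ≃ₐ[ℚ] Ω, σ (τ (x * y)) = τ (σ (x * y)) := by
  have : CharZero Ω := algebraRat.charZero Ω
  have hcop : (p ^ k).Coprime m' := Nat.Coprime.pow_left k ((hp.coprime_iff_not_dvd).mpr hpm)
  have hpk : 0 < p ^ k := pow_pos hp.pos k
  have hm0 : 0 < p ^ k * m' := Nat.mul_pos hpk hm'
  have : NeZero (p ^ k * m') := ⟨hm0.ne'⟩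
  have : NeZero (p ^ k) := ⟨hpk.ne'⟩
  obtain ⟨η, hη⟩ := HasEnoughRootsOfUnity.exists_primitiveRoot Ω (p ^ k * m')
  have := ZMod.isCyclic_units_of_prime_pow p hp hp2 k
  obtain ⟨g, hg⟩ := IsCyclic.exists_generator (α := (ZMod (p ^ k))ˣ)
  obtain ⟨u, hu1, hu2⟩ := Nat.chineseRemainder hcop (g : ZMod (p ^ k)).val 1
  have hug : (u : ZMod (p ^ k)) = g := by
    rw [(ZMod.natCast_eq_natCast_iff _ _ _).mpr hu1, ZMod.natCast_val, ZMod.cast_id]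
  have hucop : u.Coprime (p ^ k * m') := by
    apply Nat.Coprime.mul_right
    · rw [← ZMod.isUnit_iff_coprime, hug]; exact g.isUnit
    · have := hu2.gcd_eq
      rwa [Nat.gcd_one_left] at this
  obtain ⟨t, ht⟩ := exists_aut hm0 hη hucop
  -- an exponent congruent to 1 modulo the second factor is governed by its residue modulo `p ^ k`
  have hmod : ∀ a b : ℕ, a ≡ b [MOD m'] → (a : ZMod (p ^ k)) = b → a ≡ b [MOD (p ^ k * m')] :=
    fun a b h1 h2 => (Nat.modEq_and_modEq_iff_modEq_mul hcop).mp
      ⟨(ZMod.natCast_eq_natCast_iff _ _ _).mp h2, h1⟩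
  have hui : ∀ i : ℕ, u ^ i ≡ 1 [MOD m'] := fun i => by simpa using hu2.pow i
  have hr : orderOf g = (p - 1) * p ^ (k - 1) := by
    rw [orderOf_eq_card_of_forall_mem_zpowers hg, Nat.card_eq_fintype_card, ZMod.card_units_eq_totient,
      Nat.totient_prime_pow hp hk, mul_comm]
  have htK : ∀ y ∈ cyc Ω (p ^ k * m'), (t ^ (orderOf g)) y = y := by
    intro y hy
    refine eq_on_cyc hη (t ^ (orderOf g)) 1 ?_ y hy
    rw [pow_apply t ht, AlgEquiv.one_apply]
    conv_rhs => rw [← pow_one η]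
    rw [pow_eq_iff hm0.ne' hη]
    apply hmod _ _ (hui _)
    push_cast
    rw [hug, ← Units.val_pow_eq_pow_val, pow_orderOf_eq_one, Units.val_one]
  refine step (cyc Ω (p ^ k * m')) (cyc Ω m') t (orderOf g) cyc_stable (cyc_comm hm0 hη) ?_
    (orderOf_pos g) hx hsq hcomm ?_ htK ?_
  · intro i hi j hj h
    have h1 := h η (root_mem_cyc hη.pow_eq_one)
    rw [pow_apply t ht, pow_apply t ht, pow_eq_iff hm0.ne' hη] at h1
    have h2 := (ZMod.natCast_eq_natCast_iff _ _ _).mpr ((Nat.modEq_and_modEq_iff_modEq_mul hcop).mpr h1).1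
    push_cast at h2
    rw [hug, ← Units.val_pow_eq_pow_val, ← Units.val_pow_eq_pow_val] at h2
    exact pow_injOn_Iio_orderOf hi hj (Units.ext h2)
  · rw [hr]
    rw [hr] at htK
    exact odd_fix hp hp2 rfl hη t ht hu2 hx hsq hcomm htK
  · intro σ hσ
    obtain ⟨v, hv1, hv2⟩ := aut_root hη σ
    have h1 := hσ (η ^ (p ^ k)) (root_mem_cyc (by rw [← pow_mul, hη.pow_eq_one]))
    rw [map_pow, hv2, ← pow_mul, pow_eq_iff hm0.ne' hη] at h1
    have h2 : v ≡ 1 [MOD m'] := by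
      apply Nat.ModEq.mul_left_cancel' hpk.ne'
      rwa [mul_one, mul_comm (p ^ k) v]
    let V := ZMod.unitOfCoprime v (Nat.Coprime.coprime_mul_right_right hv1)
    obtain ⟨i, hi⟩ := (mem_powers_iff_mem_zpowers.mpr (hg V))
    refine ⟨i, eq_on_cyc hη _ _ ?_⟩
    rw [pow_apply t ht, hv2, pow_eq_iff hm0.ne' hη]
    apply hmod _ _ (h2.trans (hui i).symm)
    push_cast
    rw [hug]
    have := congrArg Units.val hi
    simp only [Units.val_pow_eq_pow_val] at this
    rw [this]
    exact (ZMod.coe_unitOfCoprime v _).symm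

end oddpart
end CycAux
namespace CycAux
section twopart

lemma five_pow (N : ℕ) : ∃ c : ℤ, (5 : ℤ) ^ (2 ^ N) = 1 + 2 ^ (N + 2) * (2 * c + 1) := by
  induction N with
  | zero => exact ⟨0, by norm_num⟩
  | succ N ih =>
    obtain ⟨c, hc⟩ := ih
    refine ⟨c + 2 ^ N * (2 * c + 1) ^ 2, ?_⟩
    rw [pow_succ 2 N, pow_mul, hc]
    ring

lemma exists_five_pow (N : ℕ) (v : ℤ) (hv : 4 ∣ v - 1) : ∃ i : ℕ, (2 : ℤ) ^ (N + 2) ∣ v - 5 ^ i := by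
  induction N with
  | zero => exact ⟨0, by simpa using hv⟩
  | succ N ih =>
    obtain ⟨i, e, he⟩ := ih
    rcases Int.even_or_odd' e with ⟨f, hf | hf⟩
    · exact ⟨i, f, by rw [he, hf]; ring⟩
    · obtain ⟨c, hc⟩ := five_pow N
      obtain ⟨d, hd⟩ : Odd ((5 : ℤ) ^ i) := Odd.pow (by decide)
      refine ⟨i + 2 ^ N, f - c - d * (2 * c + 1), ?_⟩
      rw [pow_add, hc]
      have : v = 5 ^ i + 2 ^ (N + 2) * e := by linarith
      rw [this, hf, hd]
      ring

variable {Ω : Type} [Field Ω] [Algebra ℚ Ω]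

lemma two_step [IsGalois ℚ Ω] [IsAlgClosed Ω] (n : ℕ)
    {x : Ω} (hx : x ≠ 0) (hsq : x ^ 2 ∈ cyc Ω (2 ^ (n + 2)))
    (hcomm : ∀ σ τ : Ω ≃ₐ[ℚ] Ω, σ (τ x) = τ (σ x)) :
    ∃ y ∈ cyc Ω (2 ^ (n + 3)), y ≠ 0 ∧ (x * y) ^ 2 ∈ cyc Ω 4 ∧
      ∀ σ τ : Ω ≃ₐ[ℚ] Ω, σ (τ (x * y)) = τ (σ (x * y)) := by
  have : CharZero Ω := algebraRat.charZero Ω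
  have hm0 : 0 < 2 ^ (n + 3) := by positivity
  have : NeZero (2 ^ (n + 3)) := ⟨hm0.ne'⟩
  have : NeZero (2 ^ (n + 2)) := ⟨by positivity⟩
  obtain ⟨η, hη⟩ := HasEnoughRootsOfUnity.exists_primitiveRoot Ω (2 ^ (n + 3))
  have hcop : Nat.Coprime 5 (2 ^ (n + 3)) := Nat.Coprime.pow_right _ (by norm_num)
  obtain ⟨t, ht⟩ := exists_aut hm0 hη hcop
  have ho : orderOf (5 : ZMod (2 ^ (n + 3))) = 2 ^ (n + 1) := ZMod.orderOf_five (n + 1)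
  have hz : ∀ a b : ℕ, (a : ZMod (2 ^ (n + 3))) = b ↔ a ≡ b [MOD 2 ^ (n + 3)] := fun a b =>
    ZMod.natCast_eq_natCast_iff _ _ _
  have htK : ∀ y ∈ cyc Ω (2 ^ (n + 3)), (t ^ (2 ^ (n + 1))) y = y := by
    intro y hy
    refine eq_on_cyc hη (t ^ (2 ^ (n + 1))) 1 ?_ y hy
    rw [pow_apply t ht, AlgEquiv.one_apply]
    conv_rhs => rw [← pow_one η]
    rw [pow_eq_iff hm0.ne' hη, ← hz]
    push_cast
    rw [← ho, pow_orderOf_eq_one]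
  refine step (cyc Ω (2 ^ (n + 3))) (cyc Ω 4) t (2 ^ (n + 1)) cyc_stable (cyc_comm hm0 hη) ?_
    (by positivity) hx (cyc_mono (pow_dvd_pow 2 (by omega)) hsq) hcomm ?_ htK ?_
  · intro i hi j hj h
    have h1 := h η (root_mem_cyc hη.pow_eq_one)
    rw [pow_apply t ht, pow_apply t ht, pow_eq_iff hm0.ne' hη, ← hz] at h1
    push_cast at h1
    rw [← ho] at hi hj
    exact pow_injOn_Iio_orderOf hi hj h1
  · have hη2 : IsPrimitiveRoot (η ^ 2) (2 ^ (n + 2)) := hη.pow hm0 (by ring)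
    have hfix : ∀ y ∈ cyc Ω (2 ^ (n + 2)), (t ^ (2 ^ n)) y = y := by
      refine eq_on_cyc hη2 (t ^ (2 ^ n)) 1 ?_
      rw [map_pow, pow_apply t ht, AlgEquiv.one_apply, ← pow_mul, pow_eq_iff hm0.ne' hη]
      have h5 : 5 ^ 2 ^ n ≡ 1 [MOD 2 ^ (n + 2)] := by
        rw [← ZMod.natCast_eq_natCast_iff]
        push_cast
        rw [← ZMod.orderOf_five n, pow_orderOf_eq_one]
      have := h5.mul_right' 2
      rwa [one_mul, ← pow_succ] at this
    rw [pow_succ 2 n, mul_two, pow_add, AlgEquiv.mul_apply]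
    rcases sq_fix_sign _ hsq _ hfix with h | h
    · rw [h, h]
    · rw [h, map_neg, h, neg_neg]
  · intro σ hσ
    obtain ⟨v, hv1, hv2⟩ := aut_root hη σ
    have h1 := hσ (η ^ (2 ^ (n + 1))) (root_mem_cyc (by
      rw [← pow_mul, show 2 ^ (n + 1) * 4 = 2 ^ (n + 3) by ring, hη.pow_eq_one]))
    rw [map_pow, hv2, ← pow_mul, pow_eq_iff hm0.ne' hη] at h1
    have h2 : v ≡ 1 [MOD 4] := by
      apply Nat.ModEq.mul_left_cancel' (c := 2 ^ (n + 1)) (by positivity)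
      rwa [mul_one, mul_comm _ v, show 2 ^ (n + 1) * 4 = 2 ^ (n + 3) by ring]
    obtain ⟨i, hi⟩ := exists_five_pow (n + 1) v (by
      have := (Nat.modEq_iff_dvd.mp h2.symm)
      simpa using this)
    refine ⟨i, eq_on_cyc hη _ _ ?_⟩
    rw [pow_apply t ht, hv2, pow_eq_iff hm0.ne' hη]
    apply Nat.ModEq.symm
    rw [Nat.modEq_iff_dvd]
    push_cast
    exact hi

lemma four_step [IsGalois ℚ Ω] [IsAlgClosed Ω] (c : Ω ≃ₐ[ℚ] Ω) (hc1 : ∀ x, c (c x) = x)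
    (hc2 : ∀ z : Ω, ∀ n : ℕ, 0 < n → z ^ n = 1 → c z = z⁻¹)
    {x : Ω} (hx : x ≠ 0) (hsq : x ^ 2 ∈ cyc Ω 4)
    (hcomm : ∀ σ τ : Ω ≃ₐ[ℚ] Ω, σ (τ x) = τ (σ x)) :
    ∃ y ∈ cyc Ω 4, y ≠ 0 ∧ (x * y) ^ 2 ∈ (⊥ : IntermediateField ℚ Ω) ∧
      ∀ σ τ : Ω ≃ₐ[ℚ] Ω, σ (τ (x * y)) = τ (σ (x * y)) := by
  have : CharZero Ω := algebraRat.charZero Ω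
  obtain ⟨η, hη⟩ := HasEnoughRootsOfUnity.exists_primitiveRoot Ω 4
  have hcη : c η = η ^ 3 := by
    rw [hc2 η 4 (by norm_num) hη.pow_eq_one]
    apply inv_eq_of_mul_eq_one_right
    rw [← pow_succ', hη.pow_eq_one]
  have hne : η ^ 3 ≠ η := by
    intro h
    have := (pow_eq_iff (by norm_num) hη 3 1).mp (by rw [h, pow_one])
    exact absurd this (by decide)
  have hsqc : ∀ y : Ω, (c ^ 2) y = y := fun y => by
    rw [pow_two, AlgEquiv.mul_apply, hc1]
  refine step (cyc Ω 4) ⊥ c 2 cyc_stable (cyc_comm (by norm_num) hη) ?_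
    (by norm_num) hx hsq hcomm (hsqc x) (fun y _ => hsqc y) ?_
  · intro i hi j hj h
    have h1 := h η (root_mem_cyc hη.pow_eq_one)
    interval_cases i <;> interval_cases j <;> simp [hcη] at h1 ⊢
    · exact hne h1.symm
    · exact hne h1
  · intro σ _
    obtain ⟨v, hv1, hv2⟩ := aut_root hη σ
    have hv : v % 4 = 1 ∨ v % 4 = 3 := by
      have : v.Coprime 2 := Nat.Coprime.coprime_dvd_right (by norm_num) hv1
      have := Nat.coprime_two_right.mp this
      have := Nat.odd_iff.mp this
      omega
    rcases hv with hv | hv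
    · refine ⟨0, eq_on_cyc hη _ _ ?_⟩
      rw [pow_zero, AlgEquiv.one_apply, hv2]
      conv_rhs => rw [← pow_one η]
      rw [pow_eq_iff (by norm_num) hη]
      exact hv
    · refine ⟨1, eq_on_cyc hη _ _ ?_⟩
      rw [pow_one, hcη, hv2, pow_eq_iff (by norm_num) hη]
      exact hv

/-- The special case of the Kronecker-Weber theorem that is needed here. -/
theorem kw2 [IsGalois ℚ Ω] [IsAlgClosed Ω] (c : Ω ≃ₐ[ℚ] Ω) (hc1 : ∀ x, c (c x) = x)
    (hc2 : ∀ z : Ω, ∀ n : ℕ, 0 < n → z ^ n = 1 → c z = z⁻¹) (m : ℕ) :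
    0 < m → ∀ x : Ω, x ≠ 0 → x ^ 2 ∈ cyc Ω m →
      (∀ σ τ : Ω ≃ₐ[ℚ] Ω, σ (τ x) = τ (σ x)) → x ∈ cycAll Ω := by
  have cancel : ∀ (n : ℕ), 0 < n → ∀ x y : Ω, y ≠ 0 → y ∈ cyc Ω n → x * y ∈ cycAll Ω →
      x ∈ cycAll Ω := by
    intro n hn x y hy0 hy h
    have := div_mem h (cyc_le_cycAll hn hy)
    rwa [mul_div_cancel_right₀ _ hy0] at this
  induction m using Nat.strong_induction_on with
  | _ m ih =>
    intro hm x hx hsq hcomm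
    by_cases hodd : ∃ p : ℕ, p.Prime ∧ p ≠ 2 ∧ p ∣ m
    · obtain ⟨p, hp, hp2, hpm⟩ := hodd
      obtain ⟨k, m', hm', rfl⟩ := Nat.exists_eq_pow_mul_and_not_dvd hm.ne' p hp.ne_one
      have hm'0 : 0 < m' := Nat.pos_of_mul_pos_left hm
      have hk : 0 < k := by
        rcases Nat.eq_zero_or_pos k with h | h
        · subst h
          exact absurd (by simpa using hpm) hm'
        · exact h
      obtain ⟨y, hy, hy0, h1, h2⟩ := odd_step hp hp2 hk hm'0 hm' hx hsq hcomm
      refine cancel _ hm x y hy0 hy (ih m' ?_ hm'0 (x * y) (mul_ne_zero hx hy0) h1 h2)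
      exact lt_mul_of_one_lt_left hm'0 (Nat.one_lt_pow hk.ne' hp.one_lt)
    · push Not at hodd
      have hm2 : ∃ l : ℕ, m = 2 ^ l :=
        ⟨_, Nat.eq_prime_pow_of_unique_prime_dvd hm.ne' (fun {d} hd hdm => by
          by_contra h
          exact hodd d hd h hdm)⟩
      obtain ⟨l, rfl⟩ := hm2
      obtain ⟨y, hy, hy0, h1, h2⟩ := two_step l hx
        (cyc_mono (pow_dvd_pow 2 (by omega)) hsq) hcomm
      refine cancel _ (by positivity) x y hy0 hy ?_
      obtain ⟨y', hy', hy0', h1', h2'⟩ := four_step c hc1 hc2 (mul_ne_zero hx hy0) h1 h2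
      exact cancel 4 (by norm_num) _ y' hy0' hy' (sqrt_bot_mem _ h1')

end twopart
end CycAux
namespace CycAux

lemma exp_mem_of_root {n : ℕ} (hn : 0 < n) {z : ℂ} (hz : z ^ n = 1) :
    z ∈ IntermediateField.adjoin ℚ
        ({Complex.exp (2 * (Real.pi : ℂ) * Complex.I / (n : ℂ))} : Set ℂ) := by
  have : NeZero n := ⟨hn.ne'⟩
  obtain ⟨i, -, rfl⟩ := (Complex.isPrimitiveRoot_exp n hn.ne').eq_pow_of_pow_eq_one hz
  exact pow_mem (IntermediateField.mem_adjoin_simple_self ℚ _) i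

lemma adjoin_exp_mono {n m : ℕ} (hn : 0 < n) (hm : 0 < m) (h : n ∣ m) :
    IntermediateField.adjoin ℚ
        ({Complex.exp (2 * (Real.pi : ℂ) * Complex.I / (n : ℂ))} : Set ℂ) ≤
    IntermediateField.adjoin ℚ
        ({Complex.exp (2 * (Real.pi : ℂ) * Complex.I / (m : ℂ))} : Set ℂ) := by
  apply IntermediateField.adjoin_le_iff.mpr
  rintro _ rfl
  apply exp_mem_of_root hm
  obtain ⟨k, rfl⟩ := h
  rw [pow_mul, (Complex.isPrimitiveRoot_exp n hn.ne').pow_eq_one, one_pow]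

lemma exists_exp_of_mem (Ω : IntermediateField ℚ ℂ) {x : Ω} (hx : x ∈ cycAll Ω) :
    ∃ n : ℕ, 0 < n ∧ (x : ℂ) ∈ IntermediateField.adjoin ℚ
        ({Complex.exp (2 * (Real.pi : ℂ) * Complex.I / (n : ℂ))} : Set ℂ) := by
  induction hx using IntermediateField.adjoin_induction with
  | mem x hx =>
    obtain ⟨n, hn, hz⟩ := hx
    refine ⟨n, hn, exp_mem_of_root hn ?_⟩
    simpa using congrArg Subtype.val hz
  | algebraMap q =>
    refine ⟨1, one_pos, ?_⟩
    have : ((algebraMap ℚ Ω q : Ω) : ℂ) = algebraMap ℚ ℂ q := by simp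
    rw [this]
    exact IntermediateField.algebraMap_mem _ q
  | add x y _ _ hx hy =>
    obtain ⟨n, hn, h1⟩ := hx
    obtain ⟨m, hm, h2⟩ := hy
    exact ⟨n * m, Nat.mul_pos hn hm, add_mem
      (adjoin_exp_mono hn (Nat.mul_pos hn hm) (dvd_mul_right _ _) h1)
      (adjoin_exp_mono hm (Nat.mul_pos hn hm) (dvd_mul_left _ _) h2)⟩
  | inv x _ hx =>
    obtain ⟨n, hn, h1⟩ := hx
    exact ⟨n, hn, inv_mem h1⟩
  | mul x y _ _ hx hy =>
    obtain ⟨n, hn, h1⟩ := hx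
    obtain ⟨m, hm, h2⟩ := hy
    exact ⟨n * m, Nat.mul_pos hn hm, mul_mem
      (adjoin_exp_mono hn (Nat.mul_pos hn hm) (dvd_mul_right _ _) h1)
      (adjoin_exp_mono hm (Nat.mul_pos hn hm) (dvd_mul_left _ _) h2)⟩

lemma exists_conj : ∃ c : algebraicClosure ℚ ℂ ≃ₐ[ℚ] algebraicClosure ℚ ℂ,
    (∀ x, c (c x) = x) ∧
    (∀ z : algebraicClosure ℚ ℂ, ∀ n : ℕ, 0 < n → z ^ n = 1 → c z = z⁻¹) := by
  have hmem : ∀ x : algebraicClosure ℚ ℂ, (starRingEnd ℂ) (x : ℂ) ∈ algebraicClosure ℚ ℂ := by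
    intro x
    have hx : IsAlgebraic ℚ (x : ℂ) := mem_algebraicClosure_iff.mp x.2
    apply mem_algebraicClosure_iff.mpr
    exact hx.algHom (starRingEnd ℂ).toRatAlgHom
  let c0 : algebraicClosure ℚ ℂ ≃+* algebraicClosure ℚ ℂ :=
    { toFun := fun x => ⟨_, hmem x⟩
      invFun := fun x => ⟨_, hmem x⟩
      left_inv := fun x => by apply Subtype.ext; simp
      right_inv := fun x => by apply Subtype.ext; simp
      map_mul' := fun x y => by apply Subtype.ext; simp
      map_add' := fun x y => by apply Subtype.ext; simp }
  refine ⟨AlgEquiv.ofRingEquiv (f := c0) (fun q => by simp), fun x => c0.left_inv x, ?_⟩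
  intro z n hn hz
  apply Subtype.ext
  show (starRingEnd ℂ) (z : ℂ) = (z : ℂ)⁻¹
  have hz' : (z : ℂ) ^ n = 1 := by simpa using congrArg Subtype.val hz
  have : ‖(z : ℂ)‖ = 1 := Complex.norm_eq_one_of_pow_eq_one hz' hn.ne'
  exact (Complex.inv_eq_conj this).symm

end CycAux

namespace ModularData
variable {Φ : Type} [Fintype Φ] [DecidableEq Φ] (M : ModularData Φ)

open CycAux

lemma S_cyclotomic (a b : Φ) : ∃ n : ℕ, 0 < n ∧ M.S a b ∈ IntermediateField.adjoin ℚ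
        ({Complex.exp (2 * (Real.pi : ℂ) * Complex.I / (n : ℂ))} : Set ℂ) := by
  obtain ⟨m, hm, hT⟩ := M.T_pow
  let s : Φ → Φ → algebraicClosure ℚ ℂ := fun a b =>
    ⟨M.S a b, mem_algebraicClosure_iff.mpr (M.S_algebraic a b)⟩
  have hTalg : ∀ a, IsAlgebraic ℚ (M.T a a) := fun a =>
    (IsIntegral.of_pow hm (by rw [hT a]; exact isIntegral_one)).isAlgebraic
  let t : Φ → algebraicClosure ℚ ℂ := fun a => ⟨M.T a a, mem_algebraicClosure_iff.mpr (hTalg a)⟩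
  let i : algebraicClosure ℚ ℂ →+* ℂ := algebraMap (algebraicClosure ℚ ℂ) ℂ
  have hi : Function.Injective i := RingHom.injective i
  have hs : ∀ a b, i (s a b) = M.S a b := fun _ _ => rfl
  have ht : ∀ a, i (t a) = M.T a a := fun _ => rfl
  have e : DivisionRing.toRatAlgebra = (algebraicClosure ℚ ℂ).algebra' := Subsingleton.elim _ _
  have hcl := algebraicClosure.isAlgClosure ℚ ℂ
  have : IsAlgClosed (algebraicClosure ℚ ℂ) := hcl.isAlgClosed
  have : Algebra.IsAlgebraic ℚ (algebraicClosure ℚ ℂ) := by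
    rw [e]
    exact hcl.isAlgebraic
  have : IsAlgClosure ℚ (algebraicClosure ℚ ℂ) := ⟨inferInstance, inferInstance⟩
  have : IsGalois ℚ (algebraicClosure ℚ ℂ) := inferInstance
  obtain ⟨c, hc1, hc2⟩ := exists_conj
  by_cases h0 : s a b = 0
  · refine ⟨1, one_pos, ?_⟩
    have : M.S a b = 0 := by rw [← hs, h0, map_zero]
    rw [this]; exact zero_mem _
  suffices h : s a b ∈ cycAll (algebraicClosure ℚ ℂ) from exists_exp_of_mem _ h
  refine kw2 c hc1 hc2 m hm (s a b) h0 ?_ ?_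
  · apply fix_mem
    intro σ hσ
    have h1 : ∀ a, (i.comp (σ : algebraicClosure ℚ ℂ →+* algebraicClosure ℚ ℂ)) (t a) = M.T a a := by
      intro a
      show i (σ (t a)) = M.T a a
      rw [hσ (t a) (root_mem_cyc (hi (by rw [map_pow, ht, hT, map_one]))), ht]
    have h2 := M.core_sign i (i.comp (σ : algebraicClosure ℚ ℂ →+* algebraicClosure ℚ ℂ))
      s t hs ht h1 a b
    apply hi
    have h3 : i (σ (s a b)) = M.S a b ∨ i (σ (s a b)) = - M.S a b := h2
    rw [map_pow, map_pow, map_pow, hs]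
    rcases h3 with h | h <;> rw [h]
    ring
  · intro σ τ
    obtain ⟨g, ε, hε, hg⟩ := M.core_galois i
      (i.comp (σ : algebraicClosure ℚ ℂ →+* algebraicClosure ℚ ℂ)) s hs
    obtain ⟨g', ε', hε', hg'⟩ := M.core_galois i
      (i.comp (τ : algebraicClosure ℚ ℂ →+* algebraicClosure ℚ ℂ)) s hs
    have lift : ∀ e : ℂ, (e = 1 ∨ e = -1) → ∃ f : ℤ, (f : ℂ) = e := by
      rintro e (h | h)
      · exact ⟨1, by simp [h]⟩
      · exact ⟨-1, by simp [h]⟩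
    choose f hf using fun a => lift _ (hε a)
    choose f' hf' using fun a => lift _ (hε' a)
    have k1 : ∀ a b, σ (s a b) = f a * s (g a) b := by
      intro a b
      apply hi
      rw [map_mul, map_intCast, hf, hs]
      exact (hg a b).1
    have k2 : ∀ a b, τ (s a b) = f' b * s a (g' b) := by
      intro a b
      apply hi
      rw [map_mul, map_intCast, hf', hs]
      exact (hg' a b).2
    rw [k2, k1, map_mul, map_mul, map_intCast, map_intCast, k1, k2]
    ring

end ModularData

/-- Galois symmetry. For every ring automorphism `τ` of `ℂ` there are a
permutation `g` of `Φ` and signs `ε : Φ → {±1}` with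
`τ (S_{ab}) = ε(a) S_{ga,b} = ε(b) S_{a,gb}`; moreover all entries of `S` lie in a cyclotomic
field `ℚ(e^{2πi/n})`. -/
theorem modularData_galois
    {Φ : Type} [Fintype Φ] [DecidableEq Φ] (M : ModularData Φ) :
    (∀ τ : ℂ ≃+* ℂ, ∃ (g : Equiv.Perm Φ) (ε : Φ → ℂ),
      (∀ a, ε a = 1 ∨ ε a = -1) ∧
      (∀ a b, τ (M.S a b) = ε a * M.S (g a) b ∧ τ (M.S a b) = ε b * M.S a (g b))) ∧
    (∃ n : ℕ, 0 < n ∧ ∀ a b, M.S a b ∈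
      IntermediateField.adjoin ℚ
        ({Complex.exp (2 * (Real.pi : ℂ) * Complex.I / (n : ℂ))} : Set ℂ)) := by
  refine ⟨fun τ => M.core_galois (RingHom.id ℂ) (τ : ℂ →+* ℂ) M.S (fun _ _ => rfl), ?_⟩
  choose n hn h using M.S_cyclotomic
  have hpos : 0 < ∏ a, ∏ b, n a b := Finset.prod_pos fun a _ => Finset.prod_pos fun b _ => hn a b
  refine ⟨∏ a, ∏ b, n a b, hpos, fun a b => CycAux.adjoin_exp_mono (hn a b) hpos ?_ (h a b)⟩
  exact (Finset.dvd_prod_of_mem (fun b => n a b) (Finset.mem_univ b)).trans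
    (Finset.dvd_prod_of_mem (fun a => ∏ b, n a b) (Finset.mem_univ a))
end

section
/- Let (S,T) be modular data on Φ. Then every modular invariant M for (S,T) satisfies ∑_{a,b∈Φ} M_{ab} ≤ S_{00}^{-2}. Consequently, the set of modular invariants of a given modular data is finite. -/
open scoped BigOperators
open Complex

/-- A modular invariant for modular data `(S,T)`: a matrix of nonnegative integers commuting
(after casting to `ℂ`) with `S` and `T`, and with `M 0 0 = 1`. -/
def IsModularInvariant {Φ : Type} [Fintype Φ] [DecidableEq Φ] (M : ModularData Φ)
    (Z : Matrix Φ Φ ℕ) : Prop :=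
  (Z.map (fun n => (n : ℂ))) * M.S = M.S * (Z.map (fun n => (n : ℂ))) ∧
  (Z.map (fun n => (n : ℂ))) * M.T = M.T * (Z.map (fun n => (n : ℂ))) ∧
  Z M.zero M.zero = 1

/-- The quantum dimensions satisfy `S_{0a} ≥ S_{00}`. -/
theorem ModularData.zero_le_aux {Φ : Type} [Fintype Φ] [DecidableEq Φ] (M : ModularData Φ)
    (a : Φ) : (M.S M.zero M.zero).re ≤ (M.S M.zero a).re := by
  set v : Φ → ℝ := fun c => (M.S M.zero c).re with hv
  have hS : ∀ c, M.S M.zero c = (v c : ℂ) := fun c => by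
    apply Complex.ext
    · simp [hv]
    · simpa using (M.S_zero_pos c).1
  have hS' : ∀ c, M.S c M.zero = (v c : ℂ) := fun c => by rw [M.S_symm, hS]
  have hpos : ∀ c, 0 < v c := fun c => (M.S_zero_pos c).2
  have hU : M.S.conjTranspose * M.S = 1 := mul_eq_one_comm.mp M.S_unitary
  have hU' : ∀ d, ∑ c, (starRingEnd ℂ) (M.S c d) * M.S c M.zero
      = if d = M.zero then 1 else 0 := fun d => by
    have h := congrFun (congrFun hU d) M.zero
    simpa [Matrix.mul_apply, Matrix.one_apply] using h
  have key : ∀ b, ∑ c, (M.N a b c : ℝ) * v c = v a * v b / v M.zero := fun b => by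
    have h : ∑ c, (M.N a b c : ℂ) * M.S c M.zero
        = M.S a M.zero * M.S b M.zero / M.S M.zero M.zero := by
      calc ∑ c, (M.N a b c : ℂ) * M.S c M.zero
          = ∑ d, M.S a d * M.S b d / M.S M.zero d *
              ∑ c, (starRingEnd ℂ) (M.S c d) * M.S c M.zero := by
            simp_rw [M.verlinde, Finset.sum_mul, Finset.mul_sum]
            rw [Finset.sum_comm]
            refine Finset.sum_congr rfl fun d _ => Finset.sum_congr rfl fun c _ => ?_
            ring
        _ = _ := by simp [hU']
    simp only [hS'] at h
    exact_mod_cast h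
  obtain ⟨b, -, hb⟩ := Finset.exists_min_image Finset.univ v ⟨M.zero, Finset.mem_univ _⟩
  have hrhs : 0 < v a * v b / v M.zero := div_pos (mul_pos (hpos a) (hpos b)) (hpos _)
  have hge : v b ≤ ∑ c, (M.N a b c : ℝ) * v c := by
    have hne : ∃ c, M.N a b c ≠ 0 := by
      by_contra hcon
      push Not at hcon
      have := key b
      simp only [hcon, Nat.cast_zero, zero_mul, Finset.sum_const_zero] at this
      linarith
    obtain ⟨c, hc⟩ := hne
    have h1 : (1 : ℝ) ≤ (M.N a b c : ℝ) := by exact_mod_cast Nat.one_le_iff_ne_zero.mpr hc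
    calc v b ≤ v c := hb c (Finset.mem_univ _)
      _ ≤ (M.N a b c : ℝ) * v c := le_mul_of_one_le_left (hpos c).le h1
      _ ≤ _ := Finset.single_le_sum (f := fun c => (M.N a b c : ℝ) * v c)
          (fun i _ => mul_nonneg (Nat.cast_nonneg _) (hpos i).le) (Finset.mem_univ c)
  rw [key b, le_div_iff₀ (hpos _)] at hge
  change v M.zero ≤ v a
  have := hpos b
  nlinarith

theorem ModularData.sum_le_aux {Φ : Type} [Fintype Φ] [DecidableEq Φ] (M : ModularData Φ)
    (Z : Matrix Φ Φ ℕ) (hZ : IsModularInvariant M Z) :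
    (∑ a, ∑ b, (Z a b : ℝ)) ≤ ((M.S M.zero M.zero).re ^ 2)⁻¹ := by
  obtain ⟨hZS, -, hZ0⟩ := hZ
  have hle := M.zero_le_aux
  set v : Φ → ℝ := fun c => (M.S M.zero c).re with hv
  have hS : ∀ c, M.S M.zero c = (v c : ℂ) := fun c => by
    apply Complex.ext
    · simp [hv]
    · simpa using (M.S_zero_pos c).1
  have hpos : ∀ c, 0 < v c := fun c => (M.S_zero_pos c).2
  have h1 : M.S * (Z.map (fun n => (n : ℂ))) * M.S.conjTranspose
      = Z.map (fun n => (n : ℂ)) := by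
    rw [← hZS, Matrix.mul_assoc, M.S_unitary, Matrix.mul_one]
  have h2 := congrFun (congrFun h1 M.zero) M.zero
  simp only [Matrix.mul_apply, Matrix.map_apply, Matrix.conjTranspose_apply, hS, hZ0] at h2
  have h3 : ∑ b, (∑ a, v a * (Z a b : ℝ)) * v b = 1 := by
    have : ((∑ b, (∑ a, v a * (Z a b : ℝ)) * v b : ℝ) : ℂ) = 1 := by
      simpa using h2
    exact_mod_cast this
  have h4 : (∑ a, ∑ b, (Z a b : ℝ)) * v M.zero ^ 2 ≤ 1 := by
    rw [← h3, Finset.sum_comm, Finset.sum_mul]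
    refine Finset.sum_le_sum fun b _ => ?_
    rw [Finset.sum_mul, Finset.sum_mul]
    refine Finset.sum_le_sum fun a _ => ?_
    have h5 : v M.zero * v M.zero ≤ v a * v b :=
      mul_le_mul (hle a) (hle b) (hpos _).le (hpos a).le
    have h6 : (0 : ℝ) ≤ Z a b := Nat.cast_nonneg _
    nlinarith [mul_le_mul_of_nonneg_left h5 h6]
  rw [← one_div, le_div_iff₀ (pow_pos (hpos _) 2)]
  exact h4

/-- Every modular invariant `Z` of modular data satisfies
`∑_{a,b} Z_{ab} ≤ S_{00}⁻²`; consequently there are only finitely many modular invariants. -/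
theorem modularData_finitely_many_invariants
    {Φ : Type} [Fintype Φ] [DecidableEq Φ] (M : ModularData Φ) :
    (∀ Z : Matrix Φ Φ ℕ, IsModularInvariant M Z →
      (∑ a, ∑ b, (Z a b : ℝ)) ≤ ((M.S M.zero M.zero).re ^ 2)⁻¹) ∧
    {Z : Matrix Φ Φ ℕ | IsModularInvariant M Z}.Finite := by
  refine ⟨M.sum_le_aux, ?_⟩
  obtain ⟨n, hn⟩ := exists_nat_ge (((M.S M.zero M.zero).re ^ 2)⁻¹)
  have hfin : (Set.pi Set.univ fun _ : Φ => Set.pi Set.univ fun _ : Φ => Set.Iic n).Finite :=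
    Set.Finite.pi' (fun _ => Set.Finite.pi' fun _ => Set.finite_Iic n) |>.subset (by
      intro f hf a b
      exact hf a (Set.mem_univ a) b (Set.mem_univ b))
  refine Set.Finite.subset (s := (Set.pi Set.univ fun _ : Φ => Set.pi Set.univ fun _ : Φ =>
    Set.Iic n)) hfin fun Z hZ a _ b _ => ?_
  have h := (M.sum_le_aux Z hZ).trans hn
  have h1 : (∑ b, (Z a b : ℝ)) ≤ ∑ a, ∑ b, (Z a b : ℝ) :=
    Finset.single_le_sum (f := fun a => ∑ b, (Z a b : ℝ))
      (fun i _ => Finset.sum_nonneg fun j _ => Nat.cast_nonneg _) (Finset.mem_univ a)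
  have h2 : (Z a b : ℝ) ≤ ∑ b, (Z a b : ℝ) :=
    Finset.single_le_sum (f := fun b => (Z a b : ℝ))
      (fun i _ => Nat.cast_nonneg _) (Finset.mem_univ b)
  have h3 : (Z a b : ℝ) ≤ n := (h2.trans h1).trans h
  exact_mod_cast h3
end

section
/- Let (S,T) be modular data on Φ, let j = J0 and j' = J'0 be units with associated permutations J, J' of Φ and phases φ_j, φ_{j'} (so S_{Ja,b} = φ_j(b) S_{ab} and S_{J'a,b} = φ_{j'}(b) S_{ab} for all a,b), and let M be a modular invariant. Then M_{J0,J'0} ≤ 1; and if M_{J0,J'0} ≠ 0 then: M_{J0,J'0} = 1; for all c, d ∈ Φ, M_{cd} ≠ 0 implies φ_j(c) = φ_{j'}(d); and M_{Ja,J'b} = M_{ab} for all a, b ∈ Φ. -/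
open scoped BigOperators
open Complex

theorem md_phase_norm {Φ : Type} [Fintype Φ] [DecidableEq Φ] (M : ModularData Φ)
    (J : Equiv.Perm Φ) (φ : Φ → ℂ) (hφ : ∀ a b, M.S (J a) b = φ b * M.S a b) (b : Φ) :
    normSq (φ b) = 1 := by
  have h1 : ∑ a, normSq (M.S a b) = 1 := by
    have h := congrFun (congrFun M.S_unitary b) b
    simp only [Matrix.mul_apply, Matrix.conjTranspose_apply, Matrix.one_apply_eq] at h
    have h2 : ∀ a, M.S b a * star (M.S b a) = ((normSq (M.S a b) : ℝ) : ℂ) := by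
      intro a
      rw [M.S_symm b a, normSq_eq_conj_mul_self, mul_comm]
      rfl
    simp only [h2] at h
    exact_mod_cast h
  have h3 : ∑ a, normSq (M.S (J a) b) = 1 := by
    rw [← h1]
    exact Equiv.sum_comp J (fun a => normSq (M.S a b))
  simp only [hφ, map_mul, ← Finset.mul_sum, h1, mul_one] at h3
  exact h3

theorem md_Z_eq {Φ : Type} [Fintype Φ] [DecidableEq Φ] (M : ModularData Φ)
    (Z : Matrix Φ Φ ℕ) (hZ : IsModularInvariant M Z) (a b : Φ) :
    (Z a b : ℂ) = ∑ d, ∑ c, M.S a c * Z c d * star (M.S b d) := by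
  have h : Z.map (fun n => (n : ℂ)) = M.S * Z.map (fun n => (n : ℂ)) * M.S.conjTranspose := by
    rw [← hZ.1, Matrix.mul_assoc, M.S_unitary, Matrix.mul_one]
  have h2 := congrFun (congrFun h a) b
  simpa only [Matrix.mul_apply, Matrix.conjTranspose_apply, Matrix.map_apply,
    Finset.sum_mul] using h2

/-- Let `j = J 0` and `j' = J' 0` be units with associated permutations and
phases, and let `Z` be a modular invariant. Then `Z_{J0,J'0} ≤ 1`, and if `Z_{J0,J'0} ≠ 0`
then `Z_{J0,J'0} = 1`, `Z_{cd} ≠ 0` implies `φ_j(c) = φ_{j'}(d)`, and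
`Z_{Ja,J'b} = Z_{ab}` for all `a, b`. -/
theorem modularData_simple_current_invariant
    {Φ : Type} [Fintype Φ] [DecidableEq Φ] (M : ModularData Φ)
    (j j' : Φ)
    (hj : M.S j M.zero = M.S M.zero M.zero) (hj' : M.S j' M.zero = M.S M.zero M.zero)
    (J J' : Equiv.Perm Φ) (hJ0 : J M.zero = j) (hJ'0 : J' M.zero = j')
    (φ φ' : Φ → ℂ)
    (hφ : ∀ a b, M.S (J a) b = φ b * M.S a b)
    (hφ' : ∀ a b, M.S (J' a) b = φ' b * M.S a b)
    (Z : Matrix Φ Φ ℕ) (hZ : IsModularInvariant M Z) :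
    Z (J M.zero) (J' M.zero) ≤ 1 ∧
    (Z (J M.zero) (J' M.zero) ≠ 0 →
      Z (J M.zero) (J' M.zero) = 1 ∧
      (∀ c d, Z c d ≠ 0 → φ c = φ' d) ∧
      (∀ a b, Z (J a) (J' b) = Z a b)) := by
  have hn := md_phase_norm M J φ hφ
  have hn' := md_phase_norm M J' φ' hφ'
  have hE := md_Z_eq M Z hZ
  have hJE : ∀ a b, (Z (J a) (J' b) : ℂ) =
      ∑ d, ∑ c, (φ c * star (φ' d)) * (M.S a c * Z c d * star (M.S b d)) := by
    intro a b
    rw [hE]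
    refine Finset.sum_congr rfl fun d _ => Finset.sum_congr rfl fun c _ => ?_
    rw [hφ, hφ', star_mul]
    ring
  have hun : ∀ c d, normSq (φ c * star (φ' d)) = 1 := by
    intro c d
    have : normSq (star (φ' d)) = normSq (φ' d) := normSq_conj _
    rw [map_mul, this, hn, hn', mul_one]
  have hule : ∀ c d, (φ c * star (φ' d)).re ≤ 1 := by
    intro c d
    have h := hun c d
    rw [normSq_apply] at h
    nlinarith [mul_self_nonneg (φ c * star (φ' d)).im]
  set w : Φ → Φ → ℝ := fun d c => (M.S M.zero c).re * Z c d * (M.S M.zero d).re with hw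
  have hw0 : ∀ d c, 0 ≤ w d c := fun d c =>
    mul_nonneg (mul_nonneg (M.S_zero_pos c).2.le (Nat.cast_nonneg _)) (M.S_zero_pos d).2.le
  have hwc : ∀ d c, M.S M.zero c * Z c d * star (M.S M.zero d) = ((w d c : ℝ) : ℂ) := by
    intro d c
    have hr : ∀ e, M.S M.zero e = ((M.S M.zero e).re : ℂ) := fun e =>
      Complex.ext (by simp) (by simpa using (M.S_zero_pos e).1)
    have hs : star (M.S M.zero d) = ((M.S M.zero d).re : ℂ) := by
      rw [hr d]
      exact conj_ofReal _
    rw [hs, hr c, hw]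
    push_cast
    simp
  have s1 : (1 : ℝ) = ∑ d, ∑ c, w d c := by
    have h := hE M.zero M.zero
    simp only [hwc, hZ.2.2] at h
    exact_mod_cast h
  have s2 : (Z (J M.zero) (J' M.zero) : ℝ) = ∑ d, ∑ c, (φ c * star (φ' d)).re * w d c := by
    have h := congrArg Complex.re (hJE M.zero M.zero)
    simp only [hwc, Complex.re_sum, Complex.re_mul_ofReal, Complex.natCast_re] at h
    exact h
  have s3 : (1 : ℝ) - Z (J M.zero) (J' M.zero) =
      ∑ d, ∑ c, (1 - (φ c * star (φ' d)).re) * w d c := by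
    rw [s2]
    nth_rewrite 1 [s1]
    simp only [sub_mul, one_mul, Finset.sum_sub_distrib]
  have ht : ∀ d c, 0 ≤ (1 - (φ c * star (φ' d)).re) * w d c := fun d c =>
    mul_nonneg (sub_nonneg.2 (hule c d)) (hw0 d c)
  have hle : Z (J M.zero) (J' M.zero) ≤ 1 := by
    have : (0 : ℝ) ≤ 1 - Z (J M.zero) (J' M.zero) := by
      rw [s3]
      exact Finset.sum_nonneg fun d _ => Finset.sum_nonneg fun c _ => ht d c
    have h2 : (Z (J M.zero) (J' M.zero) : ℝ) ≤ 1 := by linarith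
    exact_mod_cast h2
  refine ⟨hle, fun hne => ?_⟩
  have h1 : Z (J M.zero) (J' M.zero) = 1 := by omega
  have hu1 : ∀ c d, Z c d ≠ 0 → φ c * star (φ' d) = 1 := by
    intro c d hcd
    rw [h1, Nat.cast_one, sub_self] at s3
    have e1 := (Finset.sum_eq_zero_iff_of_nonneg
      (fun d _ => Finset.sum_nonneg fun c _ => ht d c)).1 s3.symm d (Finset.mem_univ _)
    have e2 := (Finset.sum_eq_zero_iff_of_nonneg (fun c _ => ht d c)).1 e1 c (Finset.mem_univ _)
    have hpos : 0 < w d c := mul_pos (mul_pos (M.S_zero_pos c).2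
      (Nat.cast_pos.2 (Nat.pos_of_ne_zero hcd))) (M.S_zero_pos d).2
    have hre : (φ c * star (φ' d)).re = 1 := by
      rcases mul_eq_zero.1 e2 with h | h
      · linarith
      · exact absurd h hpos.ne'
    have hns := hun c d
    rw [normSq_apply, hre] at hns
    have him : (φ c * star (φ' d)).im = 0 := by
      apply mul_self_eq_zero.1
      linarith
    exact Complex.ext (by simpa using hre) (by simpa using him)
  refine ⟨h1, ?_, ?_⟩
  · intro c d hcd
    have h := hu1 c d hcd
    have h2 : star (φ' d) * φ' d = 1 := by
      have := normSq_eq_conj_mul_self (z := φ' d)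
      rw [hn'] at this
      simpa using this.symm
    calc φ c = φ c * (star (φ' d) * φ' d) := by rw [h2, mul_one]
      _ = φ' d := by rw [← mul_assoc, h, one_mul]
  · intro a b
    have : (Z (J a) (J' b) : ℂ) = Z a b := by
      rw [hJE, hE a b]
      refine Finset.sum_congr rfl fun d _ => Finset.sum_congr rfl fun c _ => ?_
      by_cases hcd : Z c d = 0
      · simp [hcd]
      · rw [hu1 c d hcd, one_mul]
    exact_mod_cast this
end

section
/- Let (S,T) be modular data on Φ, let τ be a ring automorphism of ℂ that commutes with complex conjugation, and let g be a permutation of Φ and ε : Φ → {1,-1} signs such that τ(S_{ab}) = ε(a) S_{ga,b} = ε(b) S_{a,gb} for all a, b ∈ Φ. Then every modular invariant M satisfies M_{ab} = ε(a) ε(b) M_{ga,gb} for all a, b ∈ Φ; in particular M_{ga,gb} = M_{ab} for all a, b, and M_{ab} ≠ 0 implies ε(a) = ε(b). -/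
open scoped BigOperators
open Complex

/-- Let `τ` be a ring automorphism of `ℂ` commuting with complex
conjugation, with associated Galois permutation `g` and signs `ε` satisfying
`τ (S_{ab}) = ε(a) S_{ga,b} = ε(b) S_{a,gb}`. Then every modular invariant `Z` satisfies
`Z_{ab} = ε(a) ε(b) Z_{ga,gb}`; in particular `Z_{ga,gb} = Z_{ab}`, and `Z_{ab} ≠ 0` implies
`ε(a) = ε(b)`. -/
theorem modularData_galois_invariant
    {Φ : Type} [Fintype Φ] [DecidableEq Φ] (M : ModularData Φ)
    (τ : ℂ ≃+* ℂ) (hτconj : ∀ z, τ ((starRingEnd ℂ) z) = (starRingEnd ℂ) (τ z))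
    (g : Equiv.Perm Φ) (ε : Φ → ℂ) (hε : ∀ a, ε a = 1 ∨ ε a = -1)
    (hτS : ∀ a b, τ (M.S a b) = ε a * M.S (g a) b ∧ τ (M.S a b) = ε b * M.S a (g b))
    (Z : Matrix Φ Φ ℕ) (hZ : IsModularInvariant M Z) :
    (∀ a b, (Z a b : ℂ) = ε a * ε b * (Z (g a) (g b) : ℂ)) ∧
    (∀ a b, Z (g a) (g b) = Z a b) ∧
    (∀ a b, Z a b ≠ 0 → ε a = ε b) := by
  have hconjε : ∀ a, (starRingEnd ℂ) (ε a) = ε a := by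
    intro a
    rcases hε a with h | h <;> simp [h]
  -- `Z = S Z S*`, entrywise
  have hent : ∀ a b, (Z a b : ℂ) =
      ∑ d, (∑ c, M.S a c * (Z c d : ℂ)) * (starRingEnd ℂ) (M.S b d) := by
    intro a b
    have h : Z.map (fun n => (n : ℂ)) =
        M.S * Z.map (fun n => (n : ℂ)) * M.S.conjTranspose := by
      rw [← hZ.1, Matrix.mul_assoc, M.S_unitary, Matrix.mul_one]
    have h2 := congrFun (congrFun h a) b
    simpa [Matrix.mul_apply, Matrix.conjTranspose_apply] using h2
  have main : ∀ a b, (Z a b : ℂ) = ε a * ε b * (Z (g a) (g b) : ℂ) := by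
    intro a b
    have h := congrArg τ (hent a b)
    simp only [map_natCast, map_sum, map_mul, hτconj] at h
    rw [h, hent (g a) (g b), Finset.mul_sum]
    refine Finset.sum_congr rfl fun d _ => ?_
    rw [(hτS b d).1, map_mul, hconjε, Finset.sum_mul, Finset.sum_mul, Finset.mul_sum]
    refine Finset.sum_congr rfl fun c _ => ?_
    rw [(hτS a c).1]
    ring
  have key : ∀ a b, Z (g a) (g b) = Z a b ∧ (Z a b ≠ 0 → ε a = ε b) := by
    intro a b
    have h := main a b
    have neg : (Z a b : ℂ) = -(Z (g a) (g b) : ℂ) → Z a b = 0 ∧ Z (g a) (g b) = 0 := by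
      intro h
      have h' : ((Z a b + Z (g a) (g b) : ℕ) : ℂ) = 0 := by
        push_cast
        rw [h]
        ring
      have h'' : Z a b + Z (g a) (g b) = 0 := by exact_mod_cast h'
      omega
    rcases hε a with ha | ha <;> rcases hε b with hb | hb <;> rw [ha, hb] at h ⊢
    · refine ⟨?_, fun _ => rfl⟩
      have : (Z a b : ℂ) = (Z (g a) (g b) : ℂ) := by rw [h]; ring
      exact_mod_cast this.symm
    · obtain ⟨h1, h2⟩ := neg (by rw [h]; ring)
      exact ⟨by rw [h1, h2], fun h => absurd h1 h⟩
    · obtain ⟨h1, h2⟩ := neg (by rw [h]; ring)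
      exact ⟨by rw [h1, h2], fun h => absurd h1 h⟩
    · refine ⟨?_, fun _ => rfl⟩
      have : (Z a b : ℂ) = (Z (g a) (g b) : ℂ) := by rw [h]; ring
      exact_mod_cast this.symm
  exact ⟨main, fun a b => (key a b).1, fun a b => (key a b).2⟩
end

section
/- Let (S,T) be modular data on Φ and let M be a modular invariant satisfying M_{0a} = δ_{0,a} for all a ∈ Φ. Then M is a permutation matrix. -/
open scoped BigOperators
open Complex

/-- A modular invariant whose `0`-row is `δ_{0,a}` is a permutation
matrix. -/
theorem modularData_invariant_perm
    {Φ : Type} [Fintype Φ] [DecidableEq Φ] (M : ModularData Φ)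
    (Z : Matrix Φ Φ ℕ) (hZ : IsModularInvariant M Z)
    (hrow : ∀ a, Z M.zero a = if M.zero = a then 1 else 0) :
    ∃ σ : Equiv.Perm Φ, ∀ a b, Z a b = if b = σ a then 1 else 0 := by
  obtain ⟨hS, -, h00⟩ := hZ
  set z := M.zero with hz
  set s : Φ → ℝ := fun a => (M.S z a).re with hs
  have spos : ∀ a, 0 < s a := fun a => (M.S_zero_pos a).2
  have sS : ∀ a, M.S z a = (s a : ℂ) := fun a =>
    Complex.ext (by simp [hs]) (by simpa using (M.S_zero_pos a).1)
  have H1 : ∀ b, ∑ c, s c * (Z c b : ℝ) = s b := by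
    intro b
    have h := congrFun (congrFun hS z) b
    simp only [Matrix.mul_apply, Matrix.map_apply, hrow, sS] at h
    simp only [Nat.cast_ite, Nat.cast_one, Nat.cast_zero, ite_mul, one_mul, zero_mul,
      Finset.sum_ite_eq, Finset.mem_univ, if_true, sS] at h
    exact_mod_cast h.symm
  have Zc : ∀ c, c ≠ z → Z c z = 0 := by
    intro c hc
    have h := H1 z
    rw [← Finset.add_sum_erase _ _ (Finset.mem_univ z), h00] at h
    have h2 : ∑ c ∈ Finset.univ.erase z, s c * (Z c z : ℝ) = 0 := by
      push_cast at h; linarith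
    rw [Finset.sum_eq_zero_iff_of_nonneg
      (fun i _ => mul_nonneg (spos i).le (Nat.cast_nonneg _))] at h2
    have h3 := h2 c (by simp [hc])
    rcases mul_eq_zero.1 h3 with h4 | h4
    · exact absurd h4 (spos c).ne'
    · exact_mod_cast h4
  have Zc' : ∀ c, Z c z = if z = c then 1 else 0 := by
    intro c
    split_ifs with h
    · rw [← h, h00]
    · exact Zc c (Ne.symm h)
  have H2 : ∀ a, ∑ c, (Z a c : ℝ) * s c = s a := by
    intro a
    have h := congrFun (congrFun hS a) z
    simp only [Matrix.mul_apply, Matrix.map_apply, Zc', M.S_symm _ z, sS] at h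
    simp only [Nat.cast_ite, Nat.cast_one, Nat.cast_zero, mul_ite, mul_one, mul_zero,
      Finset.sum_ite_eq, Finset.mem_univ, if_true, M.S_symm _ z, sS] at h
    exact_mod_cast h
  have H3 : ∀ a, ∑ c, Z a c * Z a c ≤ 1 := by
    intro a
    have h : (∑ c, (Z a c : ℝ) * Z a c) * s a ≤ 1 * s a := by
      rw [one_mul]
      conv_rhs => rw [← H2 a]
      rw [Finset.sum_mul]
      refine Finset.sum_le_sum fun c _ => ?_
      rw [mul_assoc]
      refine mul_le_mul_of_nonneg_left ?_ (Nat.cast_nonneg _)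
      rw [← H1 c, mul_comm]
      exact Finset.single_le_sum (f := fun d => s d * (Z d c : ℝ))
        (fun i _ => mul_nonneg (spos i).le (Nat.cast_nonneg _)) (Finset.mem_univ a)
    have h' := le_of_mul_le_mul_right h (spos a)
    exact_mod_cast h'
  have hrow' : ∀ a, ∃ b, Z a b ≠ 0 := by
    intro a
    by_contra! h
    have := H2 a
    simp only [h, Nat.cast_zero, zero_mul, Finset.sum_const_zero] at this
    exact (spos a).ne this
  have hcol : ∀ b, ∃ a, Z a b ≠ 0 := by
    intro b
    by_contra! h
    have := H1 b
    simp only [h, Nat.cast_zero, mul_zero, Finset.sum_const_zero] at this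
    exact (spos b).ne this
  choose f hf using hrow'
  have key : ∀ a b, Z a b = if b = f a then 1 else 0 := by
    intro a b
    have h := H3 a
    have hfa := Nat.pos_of_ne_zero (hf a)
    rw [← Finset.add_sum_erase _ _ (Finset.mem_univ (f a))] at h
    split_ifs with hb
    · subst hb
      have h2 : Z a (f a) * Z a (f a) ≤ 1 := le_trans (Nat.le_add_right _ _) h
      have h4 : Z a (f a) * 1 ≤ Z a (f a) * Z a (f a) := Nat.mul_le_mul_left _ hfa
      omega
    · have h1 := Finset.single_le_sum (f := fun c => Z a c * Z a c)
        (fun i _ => Nat.zero_le _) (show b ∈ Finset.univ.erase (f a) by simp [hb])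
      have h2 : 1 ≤ Z a (f a) * Z a (f a) := Nat.mul_pos hfa hfa
      have h3 : Z a b * Z a b = 0 := by omega
      exact mul_self_eq_zero.1 h3
  have hsurj : Function.Surjective f := by
    intro b
    obtain ⟨a, ha⟩ := hcol b
    refine ⟨a, ?_⟩
    by_contra h
    exact ha (by rw [key, if_neg (Ne.symm h)])
  exact ⟨Equiv.ofBijective f (Finite.surjective_iff_bijective.1 hsurj), key⟩
end

section
/- Let (S,T) be modular data on Φ and suppose a ∈ Φ is such that for all b, c ∈ Φ, T_{bb} = T_{cc} implies S_{ab} · conj(S_{ac}) is a nonnegative real number. Then every modular invariant M satisfies M_{aa} ≥ 1 (indeed M_{aa} = ∑_{b,c∈Φ} S_{ab} M_{bc} conj(S_{ac}) > 0). -/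
open scoped BigOperators
open Complex

/-- Suppose `a ∈ Φ` is such that `T_{bb} = T_{cc}` implies
`S_{ab} conj(S_{ac})` is a nonnegative real. Then every modular invariant `Z` satisfies
`Z_{aa} = ∑_{b,c} S_{ab} Z_{bc} conj(S_{ac})` and `Z_{aa} ≥ 1`. -/
theorem modularData_forced_exponent
    {Φ : Type} [Fintype Φ] [DecidableEq Φ] (M : ModularData Φ)
    (a : Φ)
    (ha : ∀ b c, M.T b b = M.T c c →
      ∃ r : ℝ, 0 ≤ r ∧ M.S a b * (starRingEnd ℂ) (M.S a c) = (r : ℂ))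
    (Z : Matrix Φ Φ ℕ) (hZ : IsModularInvariant M Z) :
    (Z a a : ℂ) = (∑ b, ∑ c, M.S a b * (Z b c : ℂ) * (starRingEnd ℂ) (M.S a c)) ∧
    1 ≤ Z a a := by
  obtain ⟨hS, hT, h0⟩ := hZ
  have key : (Z a a : ℂ) =
      ∑ b, ∑ c, M.S a b * (Z b c : ℂ) * (starRingEnd ℂ) (M.S a c) := by
    have h1 : Z.map (fun n => (n : ℂ)) =
        M.S * Z.map (fun n => (n : ℂ)) * M.S.conjTranspose := by
      rw [← hS, Matrix.mul_assoc, M.S_unitary, Matrix.mul_one]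
    have h2 := congrFun (congrFun h1 a) a
    simp only [Matrix.mul_apply, Matrix.map_apply, Matrix.conjTranspose_apply,
      Finset.sum_mul] at h2
    rw [Finset.sum_comm] at h2
    exact h2
  refine ⟨key, ?_⟩
  have hTd : M.T = Matrix.diagonal (fun b => M.T b b) := by
    ext b c
    by_cases h : b = c
    · subst h; simp
    · rw [M.T_diag b c h, Matrix.diagonal_apply_ne _ h]
  have hcomm : ∀ b c, Z b c ≠ 0 → M.T b b = M.T c c := by
    intro b c hbc
    rw [hTd] at hT
    have h := congrFun (congrFun hT b) c
    rw [Matrix.mul_diagonal, Matrix.diagonal_mul, Matrix.map_apply, mul_comm] at h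
    exact (mul_right_cancel₀ (Nat.cast_ne_zero.mpr hbc) h).symm
  have hnn : ∀ b c, 0 ≤ (M.S a b * (Z b c : ℂ) * (starRingEnd ℂ) (M.S a c)).re := by
    intro b c
    by_cases hbc : Z b c = 0
    · simp [hbc]
    · obtain ⟨r, hr, h⟩ := ha b c (hcomm b c hbc)
      have e : M.S a b * (Z b c : ℂ) * (starRingEnd ℂ) (M.S a c) = ((Z b c * r : ℝ) : ℂ) := by
        push_cast
        rw [← h]; ring
      rw [e, Complex.ofReal_re]
      positivity
  have hpos : 0 < (M.S a M.zero * (Z M.zero M.zero : ℂ) *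
      (starRingEnd ℂ) (M.S a M.zero)).re := by
    have hne : M.S a M.zero ≠ 0 := by
      intro h
      have := (M.S_zero_pos a).2
      rw [M.S_symm, h] at this
      simp at this
    rw [h0, Nat.cast_one, mul_one, Complex.mul_conj, Complex.ofReal_re]
    exact Complex.normSq_pos.mpr hne
  have hre : (0 : ℝ) < (Z a a : ℝ) := by
    have h := congrArg Complex.re key
    rw [Complex.natCast_re] at h
    rw [h]
    simp only [Complex.re_sum]
    refine Finset.sum_pos' (fun b _ => Finset.sum_nonneg (fun c _ => hnn b c))
      ⟨M.zero, Finset.mem_univ _, ?_⟩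
    exact Finset.sum_pos' (fun c _ => hnn _ c) ⟨M.zero, Finset.mem_univ _, hpos⟩
  exact_mod_cast hre
end
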